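/- arXiv:2211.01916 — 4 statements merged into one kernel-verified Lean document; each statement's English description precedes it below -/
import Mathlib

section
/- There is a universal constant K > 0 such that the following holds. Suppose the early-stopping discretization points δ = t₀ < t₁ < ⋯ < t_N = T with δ > 0 satisfy G_k/σ_{t_{k−1}}² ≤ 1/(K·d) for every k = 1,…,N. Then Σ_{k=1}^N ∫_{t_{k−1}}^{t_k} g(t)²·E‖∇log p_t(x_t) − ∇log p_{t_k}(x_{t_k})‖² dt ≤ K·d²·Σ_{k=1}^N G_k²/σ_{t_{k−1}}⁴, where the expectations are over the joint forward coupling of (x_t, x_{t_k}). -/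
open MeasureTheory Real

noncomputable section

namespace DiffusionKL

/-- Euclidean space `ℝ^d`. -/
abbrev Vec (d : ℕ) := EuclideanSpace ℝ (Fin d)

/-- Density of the isotropic Gaussian `N(m, v·I_d)` on `ℝ^d`. -/
def gaussDensity (d : ℕ) (m : Vec d) (v : ℝ) (x : Vec d) : ℝ :=
  (2 * π * v) ^ (-(d : ℝ) / 2) * Real.exp (-‖x - m‖ ^ 2 / (2 * v))

/-- The isotropic Gaussian measure `N(m, v·I_d)` on `ℝ^d`. -/
def gaussMeasure (d : ℕ) (m : Vec d) (v : ℝ) : Measure (Vec d) :=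
  MeasureTheory.volume.withDensity (fun x => ENNReal.ofReal (gaussDensity d m v x))

/-- The standard Gaussian measure `γ_d = N(0, I_d)` on `ℝ^d`. -/
def stdGauss (d : ℕ) : Measure (Vec d) := gaussMeasure d 0 1

/-- Kullback-Leibler divergence `KL(μ ‖ ν) = ∫ log (dμ/dν) dμ`. -/
def KLdiv {d : ℕ} (μ ν : Measure (Vec d)) : ℝ :=
  ∫ x, Real.log ((μ.rnDeriv ν x).toReal) ∂μ

/-- `G_{t,s} = ∫_t^s g(u)² du`. -/
def Gvar (g : ℝ → ℝ) (t s : ℝ) : ℝ := ∫ u in t..s, (g u) ^ 2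

/-- `α_{t,s} = exp(−G_{t,s}/2)`. -/
def alphaF (g : ℝ → ℝ) (t s : ℝ) : ℝ := Real.exp (-(Gvar g t s) / 2)

/-- `σ_t² = 1 − exp(−G_t)`. -/
def sigmaSq (g : ℝ → ℝ) (t : ℝ) : ℝ := 1 - Real.exp (-(Gvar g 0 t))

/-- The law of the forward marginal `x_t = α_t X₀ + σ_t Z`, `X₀ ∼ P`, `Z ∼ N(0,I_d)` indep. -/
def forwardLaw (d : ℕ) (P : Measure (Vec d)) (g : ℝ → ℝ) (t : ℝ) : Measure (Vec d) :=
  Measure.map (fun q : Vec d × Vec d => alphaF g 0 t • q.1 + Real.sqrt (sigmaSq g t) • q.2)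
    (P.prod (stdGauss d))

/-- Explicit density of the forward marginal `p_t` (for `t > 0`). -/
def forwardDensity (d : ℕ) (P : Measure (Vec d)) (g : ℝ → ℝ) (t : ℝ) (x : Vec d) : ℝ :=
  (2 * π * sigmaSq g t) ^ (-(d : ℝ) / 2) *
    ∫ y, Real.exp (-‖x - alphaF g 0 t • y‖ ^ 2 / (2 * sigmaSq g t)) ∂P

/-- Score function `∇ log p` of a density `p`. -/
def scoreOf {d : ℕ} (p : Vec d → ℝ) (x : Vec d) : Vec d :=
  gradient (fun z => Real.log (p z)) x

/-- Score `∇ log p_t` of the forward marginal at time `t > 0`. -/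
def fwdScore (d : ℕ) (P : Measure (Vec d)) (g : ℝ → ℝ) (t : ℝ) : Vec d → Vec d :=
  scoreOf (forwardDensity d P g t)

/-- Underlying measure for the joint forward coupling: `ω = (X₀, Z, Z')`. -/
def coupleMeasure (d : ℕ) (P : Measure (Vec d)) : Measure (Vec d × Vec d × Vec d) :=
  P.prod ((stdGauss d).prod (stdGauss d))

/-- The forward process at time `t`: `x_t(ω) = α_t X₀ + σ_t Z`. -/
def xt (d : ℕ) (g : ℝ → ℝ) (t : ℝ) (ω : Vec d × Vec d × Vec d) : Vec d :=
  alphaF g 0 t • ω.1 + Real.sqrt (sigmaSq g t) • ω.2.1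

/-- The forward process at time `s ≥ t`, coupled with `x_t` by
`x_s = α_{t,s} x_t + √(1−α_{t,s}²) Z'`. -/
def xts (d : ℕ) (g : ℝ → ℝ) (t s : ℝ) (ω : Vec d × Vec d × Vec d) : Vec d :=
  alphaF g t s • xt d g t ω + Real.sqrt (1 - (alphaF g t s) ^ 2) • ω.2.2

/-- Law of a Markov chain after `n` steps, started at `init`, with transition kernels `κ`. -/
def chainLaw (d : ℕ) (init : Measure (Vec d)) (κ : ℕ → Vec d → Measure (Vec d)) :
    ℕ → Measure (Vec d)
  | 0 => init
  | k + 1 => (chainLaw d init κ k).bind (κ k)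

/-- One step of the exponential-integrator sampler:
`ŷ_{k+1} | ŷ_k = a ∼ N(e^{G_{N−k}/2}·a + 2(e^{G_{N−k}/2} − 1)·s(a,t_{N−k}), (e^{G_{N−k}} − 1)·I_d)`. -/
def EIstep (d N : ℕ) (tp : ℕ → ℝ) (g : ℝ → ℝ) (sc : Vec d → ℝ → Vec d) (k : ℕ) (a : Vec d) :
    Measure (Vec d) :=
  gaussMeasure d
    (Real.exp (Gvar g (tp (N - k - 1)) (tp (N - k)) / 2) • a +
      (2 * (Real.exp (Gvar g (tp (N - k - 1)) (tp (N - k)) / 2) - 1)) • sc a (tp (N - k)))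
    (Real.exp (Gvar g (tp (N - k - 1)) (tp (N - k))) - 1)

/-- One step of the Euler–Maruyama sampler:
`ŷ_{k+1} | ŷ_k = a ∼ N((1 + G_{N−k}/2)·a + G_{N−k}·s(a,t_{N−k}), G_{N−k}·I_d)`. -/
def EMstep (d N : ℕ) (tp : ℕ → ℝ) (g : ℝ → ℝ) (sc : Vec d → ℝ → Vec d) (k : ℕ) (a : Vec d) :
    Measure (Vec d) :=
  gaussMeasure d
    ((1 + Gvar g (tp (N - k - 1)) (tp (N - k)) / 2) • a +
      (Gvar g (tp (N - k - 1)) (tp (N - k))) • sc a (tp (N - k)))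
    (Gvar g (tp (N - k - 1)) (tp (N - k)))

/-- Terminal law of the exponential-integrator sampler started at `N(0,I_d)`. -/
def EIlaw (d N : ℕ) (tp : ℕ → ℝ) (g : ℝ → ℝ) (sc : Vec d → ℝ → Vec d) : Measure (Vec d) :=
  chainLaw d (stdGauss d) (EIstep d N tp g sc) N

/-- Terminal law of the Euler–Maruyama sampler started at `N(0,I_d)`. -/
def EMlaw (d N : ℕ) (tp : ℕ → ℝ) (g : ℝ → ℝ) (sc : Vec d → ℝ → Vec d) : Measure (Vec d) :=
  chainLaw d (stdGauss d) (EMstep d N tp g sc) N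

/-- The weighted L² score estimation error
`(1/G_T)·Σ_{k=1}^N G_k·E_{p_{t_k}} ‖∇log p_{t_k}(x) − s(x,t_k)‖²`. -/
def scoreErr (d N : ℕ) (P : Measure (Vec d)) (g : ℝ → ℝ) (tp : ℕ → ℝ)
    (sc : Vec d → ℝ → Vec d) : ℝ :=
  (1 / Gvar g 0 (tp N)) * ∑ k ∈ Finset.range N,
    Gvar g (tp k) (tp (k + 1)) *
      ∫ x, ‖fwdScore d P g (tp (k + 1)) x - sc x (tp (k + 1))‖ ^ 2
        ∂(forwardLaw d P g (tp (k + 1)))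

/-- Entry `(i,j)` of the Hessian matrix `∇²f(x)`. -/
def hessEntry {d : ℕ} (f : Vec d → ℝ) (x : Vec d) (i j : Fin d) : ℝ :=
  fderiv ℝ (fun y => fderiv ℝ f y (EuclideanSpace.single j 1)) x (EuclideanSpace.single i 1)

/-- Frobenius norm of the Hessian matrix `∇²f(x)`. -/
def hessFrob {d : ℕ} (f : Vec d → ℝ) (x : Vec d) : ℝ :=
  Real.sqrt (∑ i, ∑ j, (hessEntry f x i j) ^ 2)

/-- Density of the Gaussian perturbation `X + σZ`, `X ∼ P`, `Z ∼ N(0,I_d)`. -/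
def perturbDensity (d : ℕ) (P : Measure (Vec d)) (σ : ℝ) (x : Vec d) : ℝ :=
  (2 * π * σ ^ 2) ^ (-(d : ℝ) / 2) * ∫ y, Real.exp (-‖x - y‖ ^ 2 / (2 * σ ^ 2)) ∂P

/-- Density of `μY + σZ`, `Y ∼ P`, `Z ∼ N(0,I_d)`. -/
def perturbDensity' (d : ℕ) (P : Measure (Vec d)) (μ σ : ℝ) (x : Vec d) : ℝ :=
  (2 * π * σ ^ 2) ^ (-(d : ℝ) / 2) * ∫ y, Real.exp (-‖x - μ • y‖ ^ 2 / (2 * σ ^ 2)) ∂P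

/-- Law of the Gaussian perturbation `X + σZ`. -/
def perturbLaw (d : ℕ) (P : Measure (Vec d)) (σ : ℝ) : Measure (Vec d) :=
  Measure.map (fun q : Vec d × Vec d => q.1 + σ • q.2)
    (P.prod (MeasureTheory.volume.withDensity
      (fun x : Vec d => ENNReal.ofReal ((2 * π) ^ (-(d : ℝ) / 2) * Real.exp (-‖x‖ ^ 2 / 2)))))

/-- The tilted conditional measure `dP̃_{μ,σ}(y|x) ∝ exp(−‖x−μy‖²/(2σ²)) dP(y)`. -/
def tiltMeasure (d : ℕ) (P : Measure (Vec d)) (μ σ : ℝ) (x : Vec d) : Measure (Vec d) :=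
  ((P.withDensity (fun y => ENNReal.ofReal (Real.exp (-‖x - μ • y‖ ^ 2 / (2 * σ ^ 2))))) Set.univ)⁻¹ •
    P.withDensity (fun y => ENNReal.ofReal (Real.exp (-‖x - μ • y‖ ^ 2 / (2 * σ ^ 2))))

/-- Sub-exponential (ψ₁-Orlicz) norm of `f` under the measure `μ`. -/
def psi1Norm {α : Type*} [MeasurableSpace α] (μ : Measure α) (f : α → ℝ) : ℝ :=
  sInf {t : ℝ | 0 < t ∧ ∫ x, Real.exp (|f x| / t) ∂μ ≤ 2}

/-- Sub-Gaussian (ψ₂-Orlicz) norm of `f` under the measure `μ`. -/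
def psi2Norm {α : Type*} [MeasurableSpace α] (μ : Measure α) (f : α → ℝ) : ℝ :=
  sInf {t : ℝ | 0 < t ∧ ∫ x, Real.exp ((f x) ^ 2 / t ^ 2) ∂μ ≤ 2}


/-- Density of `N(0, a² I)`. -/
def nd (d : ℕ) (a : ℝ) (w : Vec d) : ℝ :=
  (a ^ d)⁻¹ * (2 * π) ^ (-(d : ℝ) / 2) * Real.exp (-‖w‖ ^ 2 / (2 * a ^ 2))

lemma nd_nonneg {d : ℕ} {a : ℝ} (ha : 0 < a) (w : Vec d) : 0 ≤ nd d a w := by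
  unfold nd; positivity

lemma nd_pos {d : ℕ} {a : ℝ} (ha : 0 < a) (w : Vec d) : 0 < nd d a w := by
  unfold nd; positivity

@[fun_prop]
lemma nd_cont (d : ℕ) (a : ℝ) : Continuous (nd d a) := by
  unfold nd; fun_prop

lemma gaussDensity_one (d : ℕ) : gaussDensity d 0 1 = nd d 1 := by
  ext x; simp [gaussDensity, nd]

lemma stdGauss_eq_wd (d : ℕ) :
    stdGauss d = volume.withDensity (fun x => ENNReal.ofReal (nd d 1 x)) := by
  simp [stdGauss, gaussMeasure, gaussDensity_one]

lemma lintegral_stdGauss (d : ℕ) {f : Vec d → ENNReal} (hf : Measurable f) :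
    ∫⁻ z, f z ∂(stdGauss d) = ∫⁻ z, ENNReal.ofReal (nd d 1 z) * f z := by
  rw [stdGauss_eq_wd, lintegral_withDensity_eq_lintegral_mul _ (by fun_prop) hf]
  rfl

lemma integral_stdGauss {E : Type*} [NormedAddCommGroup E] [NormedSpace ℝ E] (d : ℕ)
    (f : Vec d → E) :
    ∫ z, f z ∂(stdGauss d) = ∫ z, nd d 1 z • f z := by
  rw [stdGauss_eq_wd, integral_withDensity_eq_integral_toReal_smul (by fun_prop) (by simp)]
  simp [ENNReal.toReal_ofReal, nd_nonneg]

lemma map_smul_stdGauss (d : ℕ) {a : ℝ} (ha : 0 < a) :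
    (stdGauss d).map (fun z => a • z) =
      volume.withDensity (fun x => ENNReal.ofReal (nd d a x)) := by
  refine Measure.ext_of_lintegral _ fun f hf => ?_
  rw [lintegral_map hf (by fun_prop), lintegral_stdGauss d (by fun_prop),
    lintegral_withDensity_eq_lintegral_mul _ (by fun_prop) hf]
  have h := Measure.map_addHaar_smul (volume : Measure (Vec d)) (r := a) ha.ne'
  have h2 : ∫⁻ w, ENNReal.ofReal (nd d 1 (a⁻¹ • w)) * f w ∂((volume : Measure (Vec d)).map (fun z => a • z))
      = ∫⁻ z, ENNReal.ofReal (nd d 1 z) * f (a • z) := by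
    rw [lintegral_map (by fun_prop) (by fun_prop)]
    simp [smul_smul, ha.ne']
  rw [← h2]
  change ∫⁻ w, _ ∂(Measure.map (a • ·) volume) = _
  rw [h, lintegral_smul_measure, smul_eq_mul, ← lintegral_const_mul _ (by fun_prop)]
  congr 1; ext w
  simp only [Pi.mul_apply]
  rw [← mul_assoc, ← ENNReal.ofReal_mul (by positivity)]
  congr 2
  have h0 : |(a ^ d)⁻¹| = (a^d)⁻¹ := abs_of_pos (by positivity)
  simp [nd, h0, norm_smul]
  rw [abs_of_pos ha, mul_assoc]
  congr 3
  field_simp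

instance (d : ℕ) : IsProbabilityMeasure (ProbabilityTheory.stdGaussian (Vec d)) := inferInstance

lemma integrable_expb (d : ℕ) {b : ℝ} (hb : 0 < b) :
    Integrable (fun z : Vec d => Real.exp (-b * ‖z‖ ^ 2)) := by
  have := GaussianFourier.integral_rexp_neg_mul_sq_norm (V := Vec d) hb
  by_contra h
  rw [integral_undef h] at this
  have : 0 < (π / b) ^ ((Module.finrank ℝ (Vec d) : ℝ) / 2) := by positivity
  linarith

lemma nd1 (d : ℕ) (z : Vec d) : nd d 1 z = (2 * π) ^ (-(d : ℝ) / 2) * Real.exp (-(1/2) * ‖z‖ ^ 2) := by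
  simp only [nd, one_pow, inv_one, one_mul]; congr 2; ring

lemma integral_exp_stdGauss (d : ℕ) {l : ℝ} (hl : l < 1/2) :
    ∫ z, Real.exp (l * ‖z‖ ^ 2) ∂(stdGauss d) = (1 - 2 * l) ^ (-(d : ℝ) / 2) := by
  rw [integral_stdGauss]
  have hb : 0 < 1/2 - l := by linarith
  have h := GaussianFourier.integral_rexp_neg_mul_sq_norm (V := Vec d) hb
  have e : ∀ z : Vec d, nd d 1 z • Real.exp (l * ‖z‖ ^ 2)
      = (2 * π) ^ (-(d : ℝ) / 2) * Real.exp (-(1/2-l) * ‖z‖ ^ 2) := by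
    intro z
    rw [nd1, smul_eq_mul, mul_assoc, ← Real.exp_add]; ring_nf
  simp_rw [e]
  rw [integral_const_mul, h]
  simp only [finrank_euclideanSpace, Fintype.card_fin]
  have : π / (1/2 - l) = (2 * π) * (1 - 2*l)⁻¹ := by
    rw [← div_eq_mul_inv, div_eq_div_iff (by linarith) (by linarith)]; ring
  rw [this, Real.mul_rpow (x := 2 * π) (y := (1 - 2 * l)⁻¹) (by positivity) (by apply inv_nonneg.2; linarith), ← mul_assoc,
    ← Real.rpow_add (by positivity), Real.inv_rpow (by linarith), ← Real.rpow_neg (by linarith)]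
  ring_nf; simp

lemma integrable_exp_stdGauss (d : ℕ) {l : ℝ} (hl : l < 1/2) :
    Integrable (fun z => Real.exp (l * ‖z‖ ^ 2)) (stdGauss d) := by
  by_contra h
  have := integral_exp_stdGauss d hl
  rw [integral_undef h] at this
  have : 0 < (1 - 2 * l) ^ (-(d : ℝ) / 2) := Real.rpow_pos_of_pos (by linarith) _
  linarith

instance (d : ℕ) : IsProbabilityMeasure (stdGauss d) := by
  have h := integral_exp_stdGauss d (l := 0) (by norm_num)
  simp [Measure.real] at h
  constructor
  have := (ENNReal.toReal_eq_one_iff _).1 h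
  exact this

lemma stdGauss_eq (d : ℕ) : stdGauss d = ProbabilityTheory.stdGaussian (Vec d) := by
  refine Measure.ext_of_charFun ?_
  ext t
  rw [ProbabilityTheory.charFun_stdGaussian, charFun_apply, integral_stdGauss]
  have h := GaussianFourier.integral_cexp_neg_mul_sq_norm_add (V := Vec d) (b := 1/2) (by norm_num)
    Complex.I t
  have e : ∀ z : Vec d, nd d 1 z • Complex.exp ((inner ℝ z t : ℝ) * Complex.I)
      = ((2 * π : ℝ) ^ (-(d : ℝ) / 2) : ℝ) * Complex.exp (-(1/2) * ‖z‖ ^ 2 + Complex.I * (inner ℝ t z : ℝ)) := by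
    intro z
    rw [nd1, Complex.real_smul, Complex.exp_add, real_inner_comm]
    push_cast
    rw [mul_assoc]
    congr 3
    ring
  simp_rw [e]
  rw [integral_const_mul, h]
  simp only [finrank_euclideanSpace, Fintype.card_fin]
  have : (π : ℂ) / (1/2) = ((2 * π : ℝ) : ℂ) := by push_cast; ring
  rw [this]
  have h3 : (((2 * π : ℝ) : ℂ)) ^ ((d : ℂ) / 2) = (((2 * π : ℝ) ^ ((d : ℝ) / 2) : ℝ) : ℂ) := by
    rw [Complex.ofReal_cpow (by positivity)]; push_cast; rfl
  rw [h3, ← mul_assoc, ← Complex.ofReal_mul, ← Real.rpow_add (by positivity)]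
  rw [show -(d:ℝ)/2 + (d:ℝ)/2 = 0 by ring, Real.rpow_zero, Complex.I_sq]
  simp only [Complex.ofReal_one, one_mul]
  congr 1; ring

instance (d : ℕ) : ProbabilityTheory.IsGaussian (stdGauss d) := by
  rw [stdGauss_eq]; infer_instance

lemma rot_stdGauss (d : ℕ) {c s : ℝ} (h : c ^ 2 + s ^ 2 = 1) :
    ((stdGauss d).prod (stdGauss d)).map
      (fun p => (c • p.1 + s • p.2, -s • p.1 + c • p.2)) = (stdGauss d).prod (stdGauss d) := by
  obtain ⟨θ, h1, h2⟩ : ∃ θ : ℝ, Real.cos θ = c ∧ Real.sin θ = s := by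
    refine ⟨Complex.arg (⟨c, s⟩ : ℂ), ?_, ?_⟩
    · have hn : ‖(⟨c, s⟩ : ℂ)‖ = 1 := by
        rw [Complex.norm_def, Complex.normSq_mk]; rw [show c * c + s * s = 1 by linarith]; simp
      rw [Complex.cos_arg (by intro h0; rw [h0] at hn; simp at hn), hn]; simp
    · have hn : ‖(⟨c, s⟩ : ℂ)‖ = 1 := by
        rw [Complex.norm_def, Complex.normSq_mk]; rw [show c * c + s * s = 1 by linarith]; simp
      rw [Complex.sin_arg, hn]; simp
  have := ProbabilityTheory.IsGaussian.map_rotation_eq_self (μ := stdGauss d)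
    (by rw [stdGauss_eq]; exact ProbabilityTheory.integral_id_stdGaussian) θ
  convert this using 2
  ext p
  · simp [ContinuousLinearMap.rotation_apply, h1, h2]
  · simp [ContinuousLinearMap.rotation_apply, h1, h2]

lemma memLp_stdGauss (d : ℕ) (p : ENNReal) (hp : p ≠ ⊤) : MemLp (fun z : Vec d => z) p (stdGauss d) :=
  ProbabilityTheory.IsGaussian.memLp_id _ p hp

lemma integral_id_stdGauss (d : ℕ) : ∫ z, z ∂(stdGauss d) = 0 := by
  rw [stdGauss_eq]; exact ProbabilityTheory.integral_id_stdGaussian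

/-- Fourth moment bound. -/
lemma moment4 (d : ℕ) (hd : 0 < d) : ∫ z, ‖z‖ ^ 4 ∂(stdGauss d) ≤ 64 * d ^ 2 := by
  have hd' : (1 : ℝ) ≤ d := by exact_mod_cast hd
  have hl : 1 / (4 * (d : ℝ)) < 1/2 := by
    rw [div_lt_div_iff₀ (by positivity) (by positivity)]; linarith
  have h := integral_exp_stdGauss d hl
  have hle : ∫ z, ‖z‖ ^ 4 ∂(stdGauss d) ≤ ∫ z, 32 * (d:ℝ) ^ 2 * Real.exp (1 / (4 * (d : ℝ)) * ‖z‖ ^ 2) ∂(stdGauss d) := by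
    refine integral_mono_of_nonneg (Filter.Eventually.of_forall fun z => by positivity)
      ((integrable_exp_stdGauss d hl).const_mul _) (Filter.Eventually.of_forall fun z => ?_)
    have := Real.pow_div_factorial_le_exp (1 / (4 * (d : ℝ)) * ‖z‖ ^ 2) (by positivity) 2
    simp only [Nat.factorial] at this
    calc ‖z‖ ^ 4 = 32 * (d:ℝ) ^ 2 * ((1 / (4 * (d : ℝ)) * ‖z‖ ^ 2) ^ 2 / 2) := by field_simp; ring
      _ ≤ _ := by
        apply mul_le_mul_of_nonneg_left _ (by positivity)
        simpa using this
  refine hle.trans ?_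
  rw [integral_const_mul, h]
  have hx : (1/2 : ℝ) ≤ (1 - 2 * (1 / (4 * (d:ℝ)))) ^ d := by
    have := one_add_mul_le_pow (a := -(2 * (1 / (4 * (d:ℝ))))) (by
      have : 2 * (1 / (4 * (d:ℝ))) ≤ 1 := by linarith
      linarith) d
    have e : 1 + (d:ℝ) * -(2 * (1 / (4 * (d:ℝ)))) = 1/2 := by field_simp; ring
    rw [e] at this; simpa [sub_eq_add_neg] using this
  set q := 1 - 2 * (1 / (4 * (d:ℝ))) with hq
  have hq0 : 0 < q := by linarith
  have hq1 : q ≤ 1 := by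
    have : 0 < 1 / (4 * (d:ℝ)) := by positivity
    linarith
  have : q ^ (-(d:ℝ)/2) ≤ 2 := by
    calc q ^ (-(d:ℝ)/2) ≤ q ^ (-(d:ℝ)) := Real.rpow_le_rpow_of_exponent_ge hq0 hq1 (by linarith)
      _ = (q ^ d)⁻¹ := by rw [Real.rpow_neg hq0.le, Real.rpow_natCast]
      _ ≤ (1/2)⁻¹ := by gcongr
      _ = 2 := by norm_num
  nlinarith [sq_nonneg (d:ℝ)]

/-- Density ratio. -/
def rho (d : ℕ) (κ : ℝ) (z : Vec d) : ℝ := κ ^ d * Real.exp ((1 - κ ^ 2) / 2 * ‖z‖ ^ 2)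

@[fun_prop]
lemma rho_cont (d : ℕ) (κ : ℝ) : Continuous (rho d κ) := by unfold rho; fun_prop

lemma rho_nonneg {d : ℕ} {κ : ℝ} (h : 0 < κ) (z : Vec d) : 0 ≤ rho d κ z := by
  unfold rho; positivity

lemma map_smul_change (d : ℕ) {a e : ℝ} (ha : 0 < a) (he : 0 < e) :
    (stdGauss d).map (fun z => e • z) =
      ((stdGauss d).withDensity (fun z => ENNReal.ofReal (rho d (a / e) z))).map (fun z => a • z) := by
  rw [map_smul_stdGauss d he]
  refine Measure.ext_of_lintegral _ fun f hf => ?_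
  rw [lintegral_map hf (by fun_prop), lintegral_withDensity_eq_lintegral_mul _ (by fun_prop) hf,
    lintegral_withDensity_eq_lintegral_mul _ (by fun_prop) (by fun_prop)]
  have h2 : ∫⁻ w, ENNReal.ofReal (rho d (a/e) (a⁻¹ • w)) * f w ∂((stdGauss d).map (fun z => a • z))
      = ∫⁻ z, ENNReal.ofReal (rho d (a/e) z) * f (a • z) ∂(stdGauss d) := by
    rw [lintegral_map (by fun_prop) (by fun_prop)]
    simp [smul_smul, ha.ne']
  simp only [Pi.mul_apply]
  rw [← h2, map_smul_stdGauss d ha, lintegral_withDensity_eq_lintegral_mul _ (by fun_prop) (by fun_prop)]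
  congr 1; ext w
  simp only [Pi.mul_apply]
  rw [← mul_assoc, ← ENNReal.ofReal_mul (nd_nonneg ha _)]
  congr 2
  simp only [nd, rho, norm_smul]
  have : Real.exp (-‖w‖ ^ 2 / (2 * e ^ 2)) = Real.exp (-‖w‖ ^ 2 / (2 * a ^ 2)) *
     Real.exp ((1 - (a / e) ^ 2) / 2 * (‖a⁻¹‖ * ‖w‖) ^ 2) := by
    rw [← Real.exp_add]; congr 1
    rw [Real.norm_of_nonneg (by positivity)]; field_simp; ring
  rw [this, div_pow a e d]
  field_simp

lemma rho_sq (d : ℕ) {r : ℝ} (hr : 0 ≤ r) (hr1 : r < 1) (hdr : d * r ^ 2 ≤ 1/2) {κ : ℝ} (hκ : 0 < κ)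
    (hκ2 : κ ^ 2 = 1 / (1 + r)) :
    Integrable (fun z => rho d κ z ^ 2) (stdGauss d) ∧ Integrable (rho d κ) (stdGauss d) ∧
    ∫ z, (rho d κ z - 1) ^ 2 ∂(stdGauss d) ≤ 2 * d * r ^ 2 := by
  have e1 : ∀ z : Vec d, rho d κ z ^ 2 = κ ^ (2 * d) * Real.exp ((1 - κ ^ 2) * ‖z‖ ^ 2) := by
    intro z; rw [rho, mul_pow, ← pow_mul, mul_comm d 2, ← Real.exp_nat_mul]; congr 2; push_cast; ring
  have hl : 1 - κ ^ 2 < 1/2 := by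
    rw [hκ2]
    have : 1/2 < 1/(1+r) := by rw [div_lt_div_iff₀] <;> linarith
    linarith
  have hl0 : 0 ≤ 1 - κ ^ 2 := by
    rw [hκ2]
    have : 1/(1+r) ≤ 1 := by rw [div_le_one] <;> linarith
    linarith
  have i2 : Integrable (fun z => rho d κ z ^ 2) (stdGauss d) := by
    simp_rw [e1]; exact (integrable_exp_stdGauss d hl).const_mul _
  have i1 : Integrable (rho d κ) (stdGauss d) := by
    unfold rho; exact (integrable_exp_stdGauss d (by linarith)).const_mul _
  refine ⟨i2, i1, ?_⟩
  have v1 : ∫ z, rho d κ z ∂(stdGauss d) = 1 := by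
    unfold rho
    rw [integral_const_mul, integral_exp_stdGauss d (by linarith)]
    rw [show 1 - 2 * ((1 - κ^2)/2) = κ ^ (2:ℝ) by rw [Real.rpow_two]; ring, ← Real.rpow_mul hκ.le, ← Real.rpow_natCast, ← Real.rpow_add hκ]
    ring_nf; simp
  have hr2 : 0 < 1 - r ^ 2 := by nlinarith
  have v2 : ∫ z, rho d κ z ^ 2 ∂(stdGauss d) = (1 - r ^ 2) ^ (-(d:ℝ)/2) := by
    simp_rw [e1]
    rw [integral_const_mul, integral_exp_stdGauss d hl, pow_mul, hκ2]
    have : 1 - 2 * (1 - 1/(1+r)) = (1 - r^2) * (1/(1+r)) ^ (2:ℝ) := by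
      rw [Real.rpow_two]; field_simp; ring
    rw [this, Real.mul_rpow hr2.le (by positivity), ← Real.rpow_mul (by positivity), ← Real.rpow_natCast,
      mul_comm, mul_assoc, ← Real.rpow_add (by positivity)]
    ring_nf; simp
  have : ∫ z, (rho d κ z - 1) ^ 2 ∂(stdGauss d) = (1 - r ^ 2) ^ (-(d:ℝ)/2) - 1 := by
    have : ∀ z, (rho d κ z - 1) ^ 2 = rho d κ z ^ 2 - 2 * rho d κ z + 1 := by intro z; ring
    simp_rw [this]
    have i3 : Integrable (fun z => rho d κ z ^ 2 - 2 * rho d κ z) (stdGauss d) := i2.sub (i1.const_mul 2)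
    rw [integral_add i3 (integrable_const _), integral_sub i2 (i1.const_mul 2),
      integral_const_mul, v1, v2]
    simp; ring
  rw [this]
  have hx : 1 - d * r ^ 2 ≤ (1 - r ^ 2) ^ d := by
    have := one_add_mul_le_pow (a := -(r^2)) (by nlinarith) d
    calc 1 - d * r ^ 2 = 1 + d * -(r^2) := by ring
      _ ≤ _ := this
      _ = _ := by rw [sub_eq_add_neg]
  have : (1 - r ^ 2) ^ (-(d:ℝ)/2) ≤ 1 + 2 * d * r ^ 2 := by
    calc (1 - r ^ 2) ^ (-(d:ℝ)/2) ≤ (1 - r ^ 2) ^ (-(d:ℝ)) :=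
          Real.rpow_le_rpow_of_exponent_ge hr2 (by nlinarith) (by
            have : (0:ℝ) ≤ d := by positivity
            linarith)
      _ = ((1 - r ^ 2) ^ d)⁻¹ := by rw [Real.rpow_neg hr2.le, Real.rpow_natCast]
      _ ≤ (1 - d * r ^ 2)⁻¹ := by
        apply inv_anti₀ (by linarith) hx
      _ ≤ _ := by
        rw [inv_le_iff_one_le_mul₀ (by linarith)]
        have : 0 ≤ d * r ^ 2 := by positivity
        nlinarith
  linarith

/-- Posterior mean of the noise given the noisy observation `x`. -/
def vv {d : ℕ} (Q : Measure (Vec d)) (a : ℝ) (x : Vec d) : Vec d :=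
  (∫ y, nd d a (x - y) ∂Q)⁻¹ • ∫ y, nd d a (x - y) • (a⁻¹ • (x - y)) ∂Q

lemma vv_meas {d : ℕ} (Q : Measure (Vec d)) [IsProbabilityMeasure Q] (a : ℝ) :
    Measurable (vv Q a) := by
  unfold vv
  refine Measurable.smul (f := fun x => (∫ y, nd d a (x - y) ∂Q)⁻¹) (Measurable.inv (f := fun x => ∫ y, nd d a (x - y) ∂Q) ?_) ?_
  · have : StronglyMeasurable (fun p : Vec d × Vec d => nd d a (p.1 - p.2)) :=
      Continuous.stronglyMeasurable (by fun_prop)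
    exact (this.integral_prod_right (ν := Q)).measurable
  · have : StronglyMeasurable (fun p : Vec d × Vec d => nd d a (p.1 - p.2) • (a⁻¹ • (p.1 - p.2))) :=
      Continuous.stronglyMeasurable (by fun_prop)
    exact (this.integral_prod_right (ν := Q)).measurable

lemma nd_mul_le (d : ℕ) {a : ℝ} (ha : 0 < a) : ∃ C : ℝ, ∀ w : Vec d,
    nd d a w * (1 + ‖w‖ ^ 4) ≤ C := by
  refine ⟨(a ^ d)⁻¹ * (2 * π) ^ (-(d : ℝ) / 2) * (1 + 8 * a ^ 4), fun w => ?_⟩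
  unfold nd
  rw [mul_assoc]
  apply mul_le_mul_of_nonneg_left _ (by positivity)
  set s := ‖w‖ ^ 2 / (2 * a ^ 2) with hs
  have hs0 : 0 ≤ s := by positivity
  have h1 : ‖w‖ ^ 4 = 4 * a ^ 4 * s ^ 2 := by rw [hs]; field_simp; ring
  have h2 := Real.pow_div_factorial_le_exp s hs0 2
  simp only [Nat.factorial] at h2
  have h3 : (1:ℝ) ≤ Real.exp s := Real.one_le_exp hs0
  rw [show -‖w‖^2/(2 * a^2) = -s by rw [hs]; ring, Real.exp_neg, inv_mul_le_iff₀ (Real.exp_pos _), h1]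
  norm_num at h2
  have : 0 < a ^ 4 := by positivity
  nlinarith

lemma nd_integrable {d : ℕ} (Q : Measure (Vec d)) [IsProbabilityMeasure Q] {a : ℝ} (ha : 0 < a)
    {E : Type*} [NormedAddCommGroup E] [NormedSpace ℝ E] [SecondCountableTopology E]
    {f : Vec d → E} (hf : Continuous f) (x : Vec d) (B : ℝ) (hB : ∀ w, ‖f w‖ ≤ B * (1 + ‖w‖ ^ 4)) :
    Integrable (fun y => nd d a (x - y) • f (x - y)) Q := by
  obtain ⟨C, hC⟩ := nd_mul_le d ha
  have hB0 : 0 ≤ B := by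
    have := (norm_nonneg _).trans (hB 0)
    simpa using this
  refine Integrable.of_bound (C := B * C) (Continuous.aestronglyMeasurable (by fun_prop)) ?_
  refine Filter.Eventually.of_forall fun y => ?_
  rw [norm_smul, Real.norm_of_nonneg (nd_nonneg ha _)]
  calc _ ≤ nd d a (x - y) * (B * (1 + ‖x - y‖ ^ 4)) :=
        mul_le_mul_of_nonneg_left (hB _) (nd_nonneg ha _)
    _ = B * (nd d a (x - y) * (1 + ‖x - y‖ ^ 4)) := by ring
    _ ≤ B * C := mul_le_mul_of_nonneg_left (hC _) hB0

lemma norm_le_one_add_four (r : ℝ) : r ≤ 1 + r ^ 4 := by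
  nlinarith [sq_nonneg (r^2 - 1), sq_nonneg (r - 1), sq_nonneg (r^2)]

lemma nd_int1 {d : ℕ} (Q : Measure (Vec d)) [IsProbabilityMeasure Q] {a : ℝ} (ha : 0 < a) (x : Vec d) :
    Integrable (fun y => nd d a (x - y)) Q := by
  have := nd_integrable Q ha (f := fun _ => (1:ℝ)) (by fun_prop) x 1 (by
    intro w; simp)
  simpa using this

lemma nd_int2 {d : ℕ} (Q : Measure (Vec d)) [IsProbabilityMeasure Q] {a : ℝ} (ha : 0 < a) (x : Vec d) :
    Integrable (fun y => nd d a (x - y) • (a⁻¹ • (x - y))) Q := by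
  refine nd_integrable Q ha (f := fun w => a⁻¹ • w) (by fun_prop) x a⁻¹ (fun w => ?_)
  rw [norm_smul, Real.norm_of_nonneg (by positivity)]
  exact mul_le_mul_of_nonneg_left (norm_le_one_add_four _) (by positivity)

lemma nd_int_pos {d : ℕ} (Q : Measure (Vec d)) [IsProbabilityMeasure Q] {a : ℝ} (ha : 0 < a) (x : Vec d) :
    0 < ∫ y, nd d a (x - y) ∂Q := by
  rw [integral_pos_iff_support_of_nonneg (fun y => nd_nonneg ha _) (nd_int1 Q ha x)]
  have : Function.support (fun y => nd d a (x - y)) = Set.univ := by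
    ext y; simp [(nd_pos ha (x - y)).ne']
  rw [this]; simp

lemma vv_center {d : ℕ} (Q : Measure (Vec d)) [IsProbabilityMeasure Q] {a : ℝ} (ha : 0 < a) (x : Vec d) :
    ∫ y, nd d a (x - y) • (a⁻¹ • (x - y) - vv Q a x) ∂Q = 0 := by
  simp_rw [smul_sub]
  rw [integral_sub (by simpa only [smul_sub] using nd_int2 Q ha x) ((nd_int1 Q ha x).smul_const _), integral_smul_const]
  have h := (nd_int_pos Q ha x).ne'
  rw [sub_eq_zero]
  conv_rhs => rw [vv, smul_smul, mul_inv_cancel₀ h, one_smul]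
  simp_rw [smul_sub]

lemma map_joint {d : ℕ} (Q : Measure (Vec d)) [IsProbabilityMeasure Q] {a : ℝ} (ha : 0 < a) :
    (Q.prod (stdGauss d)).map (fun p => (p.1, p.1 + a • p.2)) =
      (Q.prod volume).withDensity (fun p => ENNReal.ofReal (nd d a (p.2 - p.1))) := by
  refine Measure.ext_of_lintegral _ fun f hf => ?_
  rw [lintegral_map hf (by fun_prop), lintegral_withDensity_eq_lintegral_mul _ (by fun_prop) hf,
    lintegral_prod _ (by fun_prop), lintegral_prod _ (by fun_prop)]
  congr 1; ext y
  have h : ∫⁻ w, f (y, y + w) ∂((stdGauss d).map (fun z => a • z)) =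
      ∫⁻ z, f (y, y + a • z) ∂(stdGauss d) := by
    rw [lintegral_map (by fun_prop) (by fun_prop)]
  rw [← h, map_smul_stdGauss d ha, lintegral_withDensity_eq_lintegral_mul _ (by fun_prop) (by fun_prop)]
  simp only [Pi.mul_apply]
  rw [← lintegral_add_left_eq_self (fun x => ENNReal.ofReal (nd d a (x - y)) * f (y, x)) y]
  simp

/-- Orthogonality: `vv` is the posterior mean of the noise. -/
lemma orth {d : ℕ} (Q : Measure (Vec d)) [IsProbabilityMeasure Q] {a : ℝ} (ha : 0 < a)
    {f : Vec d → Vec d} (hf : Measurable f)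
    (h1 : Integrable (fun p : Vec d × Vec d => inner ℝ p.2 (f (p.1 + a • p.2))) (Q.prod (stdGauss d)))
    (h2 : Integrable (fun p : Vec d × Vec d => inner ℝ (vv Q a (p.1 + a • p.2)) (f (p.1 + a • p.2)))
      (Q.prod (stdGauss d))) :
    ∫ p, inner ℝ p.2 (f (p.1 + a • p.2)) ∂(Q.prod (stdGauss d)) =
      ∫ p, inner ℝ (vv Q a (p.1 + a • p.2)) (f (p.1 + a • p.2)) ∂(Q.prod (stdGauss d)) := by
  have hv := vv_meas Q a
  rw [← sub_eq_zero, ← integral_sub h1 h2]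
  have h3 := h1.sub h2
  let H : Vec d × Vec d → ℝ := fun q => inner ℝ (a⁻¹ • (q.2 - q.1) - vv Q a q.2) (f q.2)
  have hH : Measurable H := by
    have : Measurable (fun q : Vec d × Vec d => a⁻¹ • (q.2 - q.1) - vv Q a q.2) := by fun_prop
    exact this.inner (by fun_prop)
  have e : ∀ p : Vec d × Vec d, H (p.1, p.1 + a • p.2) = inner ℝ p.2 (f (p.1 + a • p.2))
      - inner ℝ (vv Q a (p.1 + a • p.2)) (f (p.1 + a • p.2)) := by
    intro p
    simp only [H, add_sub_cancel_left, smul_smul, inv_mul_cancel₀ ha.ne', one_smul, inner_sub_left]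
  have e2 : ((fun p : Vec d × Vec d => inner ℝ p.2 (f (p.1 + a • p.2))) - (fun p : Vec d × Vec d => inner ℝ (vv Q a (p.1 + a • p.2)) (f (p.1 + a • p.2)))) = H ∘ (fun p : Vec d × Vec d => (p.1, p.1 + a • p.2)) := by
    ext p; simp [e]
  rw [e2] at h3
  have h4 := (integrable_map_measure (f := (fun p : Vec d × Vec d => (p.1, p.1 + a • p.2))) hH.aestronglyMeasurable (by fun_prop)).2 h3
  simp_rw [← e]
  rw [← integral_map (φ := (fun p : Vec d × Vec d => (p.1, p.1 + a • p.2))) (f := H) (by fun_prop) hH.aestronglyMeasurable]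
  rw [map_joint Q ha] at h4 ⊢
  rw [integral_withDensity_eq_integral_toReal_smul (by fun_prop) (by simp)]
  rw [integrable_withDensity_iff_integrable_smul' (by fun_prop) (by simp)] at h4
  rw [integral_prod_symm _ h4]
  rw [← integral_zero (Vec d) ℝ]
  congr 1; ext x
  have : ∀ y, (ENNReal.ofReal (nd d a (x - y))).toReal • H (y, x) =
      inner ℝ (f x) (nd d a (x - y) • (a⁻¹ • (x - y) - vv Q a x)) := by
    intro y
    rw [ENNReal.toReal_ofReal (nd_nonneg ha _), real_inner_smul_right, real_inner_comm]; rfl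
  simp_rw [this]
  rw [integral_inner, vv_center Q ha, inner_zero_right]
  simp_rw [smul_sub _ _ (vv Q a x)]
  exact (nd_int2 Q ha x).sub ((nd_int1 Q ha x).smul_const _)

lemma tangent4 {d : ℕ} (v z : Vec d) : ‖v‖ ^ 4 + 4 * ‖v‖ ^ 2 * inner ℝ v (z - v) ≤ ‖z‖ ^ 4 := by
  have h := abs_le.1 (abs_real_inner_le_norm v z)
  rw [inner_sub_right, real_inner_self_eq_norm_sq]
  have hv := norm_nonneg v
  have hz := norm_nonneg z
  have : 4 * ‖v‖ ^ 2 * inner ℝ v z ≤ 4 * ‖v‖ ^ 3 * ‖z‖ := by nlinarith [sq_nonneg ‖v‖]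
  nlinarith [mul_nonneg (sq_nonneg (‖v‖ - ‖z‖)) (add_nonneg (sq_nonneg (‖v‖ + ‖z‖)) (sq_nonneg ‖v‖)), sq_nonneg (‖v‖^2 - ‖z‖^2), sq_nonneg (‖v‖ * (‖v‖ - ‖z‖))]

lemma vv_four_lint {d : ℕ} (Q : Measure (Vec d)) [IsProbabilityMeasure Q] {a : ℝ} (ha : 0 < a) :
    ∫⁻ p, ENNReal.ofReal (‖vv Q a (p.1 + a • p.2)‖ ^ 4) ∂(Q.prod (stdGauss d)) ≤
      ∫⁻ p, ENNReal.ofReal (‖p.2‖ ^ 4) ∂(Q.prod (stdGauss d)) := by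
  have hv := vv_meas Q a
  have key : ∀ F : Vec d × Vec d → ENNReal, Measurable F →
      ∫⁻ p, F (p.1, p.1 + a • p.2) ∂(Q.prod (stdGauss d)) =
        ∫⁻ x, ∫⁻ y, ENNReal.ofReal (nd d a (x - y)) * F (y, x) ∂Q := by
    intro F hF
    rw [← lintegral_map (f := F) hF (by fun_prop), map_joint Q ha,
      lintegral_withDensity_eq_lintegral_mul _ (by fun_prop) hF, lintegral_prod_symm' _ (by fun_prop)]
    rfl
  have e1 := key (fun q => ENNReal.ofReal (‖vv Q a q.2‖ ^ 4)) (by fun_prop)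
  have e2 := key (fun q => ENNReal.ofReal (‖a⁻¹ • (q.2 - q.1)‖ ^ 4)) (by fun_prop)
  simp only [add_sub_cancel_left, smul_smul, inv_mul_cancel₀ ha.ne', one_smul] at e1 e2
  rw [e1, e2]
  refine lintegral_mono fun x => ?_
  simp_rw [← ENNReal.ofReal_mul (nd_nonneg ha _)]
  have i1 : Integrable (fun y => nd d a (x - y) * ‖vv Q a x‖ ^ 4) Q := (nd_int1 Q ha x).mul_const _
  have i2 : Integrable (fun y => nd d a (x - y) * ‖a⁻¹ • (x - y)‖ ^ 4) Q := by
    refine nd_integrable Q ha (f := fun w => ‖a⁻¹ • w‖ ^ 4) (by fun_prop) x (a⁻¹ ^ 4) (fun w => ?_)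
    rw [norm_smul, Real.norm_of_nonneg (by positivity : 0 ≤ a⁻¹), mul_pow, Real.norm_of_nonneg (by positivity)]
    exact mul_le_mul_of_nonneg_left (by linarith) (by positivity)
  have i3 : Integrable (fun y => nd d a (x - y) • (a⁻¹ • (x - y) - vv Q a x)) Q := by
    simp_rw [smul_sub _ _ (vv Q a x)]
    exact (nd_int2 Q ha x).sub ((nd_int1 Q ha x).smul_const _)
  rw [← ofReal_integral_eq_lintegral_ofReal i1 (Filter.Eventually.of_forall fun y => mul_nonneg (nd_nonneg ha _) (by positivity)),
    ← ofReal_integral_eq_lintegral_ofReal i2 (Filter.Eventually.of_forall fun y => mul_nonneg (nd_nonneg ha _) (by positivity))]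
  apply ENNReal.ofReal_le_ofReal
  have i4 : Integrable (fun y => 4 * ‖vv Q a x‖ ^ 2 * inner ℝ (vv Q a x) (nd d a (x - y) • (a⁻¹ • (x - y) - vv Q a x))) Q :=
    (i3.const_inner _).const_mul _
  have h0 : ∫ y, 4 * ‖vv Q a x‖ ^ 2 * inner ℝ (vv Q a x) (nd d a (x - y) • (a⁻¹ • (x - y) - vv Q a x)) ∂Q = 0 := by
    rw [integral_const_mul, integral_inner i3, vv_center Q ha, inner_zero_right, mul_zero]
  calc _ = ∫ y, (nd d a (x - y) * ‖vv Q a x‖ ^ 4 + 4 * ‖vv Q a x‖ ^ 2 * inner ℝ (vv Q a x) (nd d a (x - y) • (a⁻¹ • (x - y) - vv Q a x))) ∂Q := by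
        rw [integral_add i1 i4, h0, add_zero]
    _ ≤ _ := by
      refine integral_mono (i1.add i4) i2 fun y => ?_
      have := mul_le_mul_of_nonneg_left (tangent4 (vv Q a x) (a⁻¹ • (x - y))) (nd_nonneg ha (x - y))
      simp only [real_inner_smul_right]
      linarith

/-- Integrability of the fourth power, and the bound. -/
lemma vv_four {d : ℕ} (Q : Measure (Vec d)) [IsProbabilityMeasure Q] {a : ℝ} (ha : 0 < a) :
    MemLp (fun p : Vec d × Vec d => vv Q a (p.1 + a • p.2)) 4 (Q.prod (stdGauss d)) ∧
    ∫ p, ‖vv Q a (p.1 + a • p.2)‖ ^ 4 ∂(Q.prod (stdGauss d)) ≤ ∫ z, ‖z‖ ^ 4 ∂(stdGauss d) := by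
  have hv := vv_meas Q a
  have h := vv_four_lint Q ha
  have hz : MemLp (fun p : Vec d × Vec d => p.2) 4 (Q.prod (stdGauss d)) :=
    (memLp_stdGauss d 4 (by simp)).comp_snd _
  have hz4 : Integrable (fun p : Vec d × Vec d => ‖p.2‖ ^ 4) (Q.prod (stdGauss d)) :=
    hz.integrable_norm_pow (by norm_num)
  have e : ∫ z, ‖z‖ ^ 4 ∂(stdGauss d) = ∫ p, ‖p.2‖ ^ 4 ∂(Q.prod (stdGauss d)) := by
    rw [integral_fun_snd (f := fun z : Vec d => ‖z‖ ^ 4)]; simp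
  have hi : Integrable (fun p : Vec d × Vec d => ‖vv Q a (p.1 + a • p.2)‖ ^ 4) (Q.prod (stdGauss d)) := by
    refine ⟨Measurable.aestronglyMeasurable (by fun_prop), ?_⟩
    rw [hasFiniteIntegral_iff_ofReal (Filter.Eventually.of_forall fun y => by positivity)]
    refine h.trans_lt ?_
    rw [← hasFiniteIntegral_iff_ofReal (Filter.Eventually.of_forall fun y => by positivity)]
    exact hz4.2
  constructor
  · rw [← integrable_norm_rpow_iff (Measurable.aestronglyMeasurable (by fun_prop)) (by norm_num) (by norm_num)]
    simpa using hi
  · rw [e]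
    rw [← ofReal_integral_eq_lintegral_ofReal hi (Filter.Eventually.of_forall fun y => by positivity),
      ← ofReal_integral_eq_lintegral_ofReal hz4 (Filter.Eventually.of_forall fun y => by positivity)] at h
    exact (ENNReal.ofReal_le_ofReal_iff (integral_nonneg fun _ => by positivity)).1 h

lemma change {d : ℕ} (Q : Measure (Vec d)) [IsProbabilityMeasure Q] {a e : ℝ} (ha : 0 < a) (he : 0 < e) :
    (Q.prod (stdGauss d)).map (fun p => (p.1, e • p.2)) =
      ((Q.prod (stdGauss d)).withDensity (fun p => ENNReal.ofReal (rho d (a / e) p.2))).map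
        (fun p => (p.1, a • p.2)) := by
  refine Measure.ext_of_lintegral _ fun f hf => ?_
  rw [lintegral_map hf (by fun_prop), lintegral_map hf (by fun_prop),
    lintegral_withDensity_eq_lintegral_mul _ (by fun_prop) (by fun_prop),
    lintegral_prod _ (by fun_prop), lintegral_prod _ (by fun_prop)]
  congr 1; ext y
  have h1 : ∫⁻ w, f (y, w) ∂((stdGauss d).map (fun z => e • z)) = ∫⁻ z, f (y, e • z) ∂(stdGauss d) :=
    lintegral_map (by fun_prop) (by fun_prop)
  simp only [Pi.mul_apply]
  rw [← h1, map_smul_change d ha he, lintegral_map (by fun_prop) (by fun_prop),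
    lintegral_withDensity_eq_lintegral_mul _ (by fun_prop) (by fun_prop)]
  rfl

lemma change_int {d : ℕ} (Q : Measure (Vec d)) [IsProbabilityMeasure Q] {a e : ℝ} (ha : 0 < a) (he : 0 < e)
    {F : Vec d × Vec d → ℝ} (hF : Measurable F) :
    (∫ p, F (p.1, e • p.2) ∂(Q.prod (stdGauss d)) =
      ∫ p, rho d (a / e) p.2 * F (p.1, a • p.2) ∂(Q.prod (stdGauss d))) ∧
    (Integrable (fun p => F (p.1, e • p.2)) (Q.prod (stdGauss d)) ↔
      Integrable (fun p : Vec d × Vec d => rho d (a / e) p.2 * F (p.1, a • p.2)) (Q.prod (stdGauss d))) := by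
  have hr : ∀ z, (ENNReal.ofReal (rho d (a / e) z)).toReal = rho d (a / e) z :=
    fun z => ENNReal.toReal_ofReal (rho_nonneg (by positivity) z)
  constructor
  · rw [← integral_map (φ := fun p : Vec d × Vec d => (p.1, e • p.2)) (f := F) (by fun_prop) hF.aestronglyMeasurable,
      change Q ha he, integral_map (by fun_prop) hF.aestronglyMeasurable,
      integral_withDensity_eq_integral_toReal_smul (by fun_prop) (by simp)]
    simp only [hr, smul_eq_mul]
  · have := integrable_map_measure (f := fun p : Vec d × Vec d => (p.1, e • p.2)) (g := F) (μ := Q.prod (stdGauss d)) hF.aestronglyMeasurable (by fun_prop)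
    change Integrable (F ∘ fun p : Vec d × Vec d => (p.1, e • p.2)) _ ↔ _
    rw [← this, change Q ha he, integrable_map_measure hF.aestronglyMeasurable (by fun_prop),
      integrable_withDensity_iff_integrable_smul' (by fun_prop) (by simp)]
    simp only [hr, smul_eq_mul, Function.comp]

lemma mp_proj {d : ℕ} (Q : Measure (Vec d)) [IsProbabilityMeasure Q] :
    MeasurePreserving (fun ω : Vec d × Vec d × Vec d => (ω.1, ω.2.1)) (coupleMeasure d Q)
      (Q.prod (stdGauss d)) := by
  have := (MeasurePreserving.id Q).prod (measurePreserving_fst (μ := stdGauss d) (ν := stdGauss d))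
  exact this

lemma mp_rot {d : ℕ} (Q : Measure (Vec d)) [IsProbabilityMeasure Q] {c s : ℝ} (h : c ^ 2 + s ^ 2 = 1) :
    MeasurePreserving (fun ω : Vec d × Vec d × Vec d => (ω.1, c • ω.2.1 + s • ω.2.2, -s • ω.2.1 + c • ω.2.2))
      (coupleMeasure d Q) (coupleMeasure d Q) := by
  have h1 : MeasurePreserving (fun p : Vec d × Vec d => (c • p.1 + s • p.2, -s • p.1 + c • p.2))
      ((stdGauss d).prod (stdGauss d)) ((stdGauss d).prod (stdGauss d)) :=
    ⟨by fun_prop, rot_stdGauss d h⟩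
  exact (MeasurePreserving.id Q).prod h1

instance {d : ℕ} (Q : Measure (Vec d)) [IsProbabilityMeasure Q] : IsProbabilityMeasure (coupleMeasure d Q) := by
  unfold coupleMeasure; infer_instance

lemma memLp_inner {α : Type*} [MeasurableSpace α] {μ : Measure α} {d : ℕ} {f g : α → Vec d}
    (hf : MemLp f 2 μ) (hg : MemLp g 2 μ) : Integrable (fun x => inner ℝ (f x) (g x)) μ := by
  have h1 := hf.integrable_norm_pow (p := 2) (by norm_num)
  have h2 := hg.integrable_norm_pow (p := 2) (by norm_num)
  refine (h1.add h2).mono' (hf.1.inner hg.1) (Filter.Eventually.of_forall fun x => ?_)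
  have := norm_inner_le_norm (𝕜 := ℝ) (f x) (g x)
  simp only [Pi.add_apply]
  nlinarith [sq_nonneg (‖f x‖ - ‖g x‖), sq_nonneg (‖f x‖), sq_nonneg (‖g x‖)]

lemma memLp_2_of_4 {α : Type*} [MeasurableSpace α] {μ : Measure α} [IsFiniteMeasure μ] {d : ℕ} {f : α → Vec d}
    (hf : MemLp f 4 μ) : MemLp f 2 μ := hf.mono_exponent (by norm_num)

lemma norm_lin {d : ℕ} (s t : ℝ) (x y : Vec d) :
    ‖s • x - t • y‖ ^ 2 = s ^ 2 * ‖x‖ ^ 2 - 2 * s * t * inner ℝ x y + t ^ 2 * ‖y‖ ^ 2 := by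
  rw [norm_sub_sq_real, norm_smul, norm_smul, real_inner_smul_left, real_inner_smul_right, mul_pow,
    mul_pow, Real.norm_eq_abs, Real.norm_eq_abs, sq_abs, sq_abs]; ring

/-- Expansion of an `L²` distance. -/
lemma int_norm_lin {α : Type*} [MeasurableSpace α] {μ : Measure α} {d : ℕ} {f g : α → Vec d}
    (hf : MemLp f 2 μ) (hg : MemLp g 2 μ) (s t : ℝ) :
    ∫ x, ‖s • f x - t • g x‖ ^ 2 ∂μ = s ^ 2 * ∫ x, ‖f x‖ ^ 2 ∂μ
      - 2 * s * t * ∫ x, inner ℝ (f x) (g x) ∂μ + t ^ 2 * ∫ x, ‖g x‖ ^ 2 ∂μ := by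
  have h1 := (hf.integrable_norm_pow (p := 2) (by norm_num)).const_mul (s ^ 2)
  have h2 := (hg.integrable_norm_pow (p := 2) (by norm_num)).const_mul (t ^ 2)
  have h3 := (memLp_inner hf hg).const_mul (2 * s * t)
  have h4 : Integrable (fun x => s ^ 2 * ‖f x‖ ^ 2 - 2 * s * t * inner ℝ (f x) (g x)) μ := h1.sub h3
  simp_rw [norm_lin]
  rw [integral_add h4 h2, integral_sub h1 h3, integral_const_mul, integral_const_mul, integral_const_mul]

lemma memLp_mp {α β : Type*} [MeasurableSpace α] [MeasurableSpace β] {μ : Measure α} {ν : Measure β}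
    {d : ℕ} {f : β → Vec d} {p : ENNReal} {φ : α → β} (hf : MemLp f p ν) (h : MeasurePreserving φ μ ν) :
    MemLp (fun x => f (φ x)) p μ := hf.comp_measurePreserving h

lemma couple_int {d : ℕ} (Q : Measure (Vec d)) [IsProbabilityMeasure Q] {F : Vec d × Vec d × Vec d → ℝ}
    (hF : Integrable F (coupleMeasure d Q)) :
    Integrable (fun q : (Vec d × Vec d) × Vec d => F (q.1.1, q.1.2, q.2))
      ((Q.prod (stdGauss d)).prod (stdGauss d)) ∧
    ∫ ω, F ω ∂(coupleMeasure d Q) =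
      ∫ q : (Vec d × Vec d) × Vec d, F (q.1.1, q.1.2, q.2) ∂((Q.prod (stdGauss d)).prod (stdGauss d)) := by
  have mpa := measurePreserving_prodAssoc Q (stdGauss d) (stdGauss d)
  exact ⟨mpa.integrable_comp_of_integrable hF,
    (mpa.integral_comp MeasurableEquiv.prodAssoc.measurableEmbedding F).symm⟩

set_option maxHeartbeats 400000 in
lemma cross {d : ℕ} (Q : Measure (Vec d)) [IsProbabilityMeasure Q] {a b e : ℝ} (ha : 0 < a)
    (he : 0 < e) (hab : a ^ 2 + b ^ 2 = e ^ 2) :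
    ∫ ω, inner ℝ (vv Q a (ω.1 + a • ω.2.1)) (vv Q e (ω.1 + a • ω.2.1 + b • ω.2.2)) ∂(coupleMeasure d Q) =
      a / e * ∫ p, ‖vv Q e (p.1 + e • p.2)‖ ^ 2 ∂(Q.prod (stdGauss d)) ∧
    MemLp (fun ω : Vec d × Vec d × Vec d => vv Q e (ω.1 + a • ω.2.1 + b • ω.2.2)) 2 (coupleMeasure d Q) ∧
    ∫ ω, ‖vv Q e (ω.1 + a • ω.2.1 + b • ω.2.2)‖ ^ 2 ∂(coupleMeasure d Q) =
      ∫ p, ‖vv Q e (p.1 + e • p.2)‖ ^ 2 ∂(Q.prod (stdGauss d)) := by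
  have hva := vv_meas Q a
  have hve := vv_meas Q e
  have hcs : (a / e) ^ 2 + (b / e) ^ 2 = 1 := by field_simp; linarith
  have hR := mp_rot Q hcs
  have hπ := mp_proj Q
  have hE : MemLp (fun p : Vec d × Vec d => vv Q e (p.1 + e • p.2)) 2 (Q.prod (stdGauss d)) :=
    memLp_2_of_4 (vv_four Q he).1
  have hA : MemLp (fun p : Vec d × Vec d => vv Q a (p.1 + a • p.2)) 2 (Q.prod (stdGauss d)) :=
    memLp_2_of_4 (vv_four Q ha).1
  have hZ : MemLp (fun p : Vec d × Vec d => p.2) 2 (Q.prod (stdGauss d)) :=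
    (memLp_stdGauss d 2 (by simp)).comp_snd _
  have hV : MemLp (fun ω : Vec d × Vec d × Vec d => vv Q a (ω.1 + a • ω.2.1)) 2 (coupleMeasure d Q) :=
    memLp_mp (f := fun p : Vec d × Vec d => vv Q a (p.1 + a • p.2)) (φ := fun ω : Vec d × Vec d × Vec d => (ω.1, ω.2.1)) hA hπ
  have hz : MemLp (fun ω : Vec d × Vec d × Vec d => ω.2.1) 2 (coupleMeasure d Q) :=
    memLp_mp (f := fun p : Vec d × Vec d => p.2) (φ := fun ω : Vec d × Vec d × Vec d => (ω.1, ω.2.1)) hZ hπ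
  have hz' : MemLp (fun ω : Vec d × Vec d × Vec d => ω.2.2) 2 (coupleMeasure d Q) :=
    ((memLp_stdGauss d 2 (by simp)).comp_snd (stdGauss d)).comp_snd Q
  have hVe : MemLp (fun ω : Vec d × Vec d × Vec d => vv Q e (ω.1 + e • ω.2.1)) 2 (coupleMeasure d Q) :=
    memLp_mp (f := fun p : Vec d × Vec d => vv Q e (p.1 + e • p.2)) (φ := fun ω : Vec d × Vec d × Vec d => (ω.1, ω.2.1)) hE hπ
  have ex : ∀ ω : Vec d × Vec d × Vec d, ω.1 + e • ((a / e) • ω.2.1 + (b / e) • ω.2.2) =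
      ω.1 + a • ω.2.1 + b • ω.2.2 := by
    intro ω
    rw [smul_add, smul_smul, smul_smul, mul_div_cancel₀ _ he.ne', mul_div_cancel₀ _ he.ne', add_assoc]
  have hV' : MemLp (fun ω : Vec d × Vec d × Vec d => vv Q e (ω.1 + a • ω.2.1 + b • ω.2.2)) 2 (coupleMeasure d Q) := by
    have := memLp_mp (f := fun ω : Vec d × Vec d × Vec d => vv Q e (ω.1 + e • ω.2.1))
      (φ := fun ω : Vec d × Vec d × Vec d => (ω.1, (a/e) • ω.2.1 + (b/e) • ω.2.2, -(b/e) • ω.2.1 + (a/e) • ω.2.2)) hVe hR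
    simpa only [ex] using this
  refine ⟨?_, hV', ?_⟩
  · -- step 1: replace V by z
    have i1 := memLp_inner hV hV'
    have i2 := memLp_inner hz hV'
    have s1 : ∫ ω, inner ℝ (vv Q a (ω.1 + a • ω.2.1)) (vv Q e (ω.1 + a • ω.2.1 + b • ω.2.2)) ∂(coupleMeasure d Q)
        = ∫ ω, inner ℝ ω.2.1 (vv Q e (ω.1 + a • ω.2.1 + b • ω.2.2)) ∂(coupleMeasure d Q) := by
      have j1 := (couple_int Q i1).1
      have j2 := (couple_int Q i2).1
      rw [(couple_int Q i1).2, (couple_int Q i2).2, integral_prod_symm _ j1, integral_prod_symm _ j2]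
      refine integral_congr_ae ?_
      filter_upwards [j1.prod_left_ae, j2.prod_left_ae] with z' k1 k2
      have := orth Q ha (f := fun x => vv Q e (x + b • z')) (by fun_prop) k2 k1
      exact this.symm
    rw [s1]
    -- step 2: rotation
    let K : Vec d × Vec d × Vec d → ℝ := fun ω => inner ℝ ((a/e) • ω.2.1 - (b/e) • ω.2.2) (vv Q e (ω.1 + e • ω.2.1))
    have hK : Measurable K := by
      have : Measurable (fun ω : Vec d × Vec d × Vec d => (a/e) • ω.2.1 - (b/e) • ω.2.2) := by fun_prop
      exact this.inner (by fun_prop)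
    have s2 : ∫ ω, inner ℝ ω.2.1 (vv Q e (ω.1 + a • ω.2.1 + b • ω.2.2)) ∂(coupleMeasure d Q) =
        ∫ ω, K ω ∂(coupleMeasure d Q) := by
      conv_rhs => rw [← hR.map_eq]
      rw [integral_map (by fun_prop) hK.aestronglyMeasurable]
      congr 1; ext ω
      simp only [K, ex]
      congr 1
      have : ω.2.1 = ((a/e)^2 + (b/e)^2) • ω.2.1 := by rw [hcs, one_smul]
      conv_lhs => rw [this]
      module
    rw [s2]
    have i3 := memLp_inner hz hVe
    have i4 := memLp_inner hz' hVe
    simp only [K, inner_sub_left, real_inner_smul_left]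
    rw [integral_sub (i3.const_mul _) (i4.const_mul _), integral_const_mul, integral_const_mul]
    have s3 : ∫ ω, inner ℝ ω.2.2 (vv Q e (ω.1 + e • ω.2.1)) ∂(coupleMeasure d Q) = 0 := by
      rw [(couple_int Q i4).2, integral_prod _ (couple_int Q i4).1, ← integral_zero (Vec d × Vec d) ℝ]
      congr 1; ext p
      have : ∫ z', inner ℝ (vv Q e (p.1 + e • p.2)) z' ∂(stdGauss d) = 0 := by
        rw [integral_inner ((memLp_stdGauss d 1 (by simp)).integrable le_rfl), integral_id_stdGauss, inner_zero_right]
      rw [← this]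
      congr 1; ext z'
      exact real_inner_comm _ _
    rw [s3, mul_zero, sub_zero]
    congr 1
    have s4 : ∫ ω, inner ℝ ω.2.1 (vv Q e (ω.1 + e • ω.2.1)) ∂(coupleMeasure d Q) =
        ∫ p, inner ℝ p.2 (vv Q e (p.1 + e • p.2)) ∂(Q.prod (stdGauss d)) := by
      rw [← hπ.map_eq, integral_map (by fun_prop) (by rw [hπ.map_eq]; exact (memLp_inner hZ hE).1)]
    rw [s4, orth Q he hve (memLp_inner hZ hE) (memLp_inner hE hE)]
    simp_rw [real_inner_self_eq_norm_sq]
  · have m : Measurable (fun p : Vec d × Vec d => ‖vv Q e (p.1 + e • p.2)‖ ^ 2) := by fun_prop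
    have := hπ.comp hR
    conv_rhs => rw [← this.map_eq]
    rw [integral_map (by fun_prop) m.aestronglyMeasurable]
    simp only [Function.comp_def, ex]

lemma pt_ineq {r κ ρ c Z U : ℝ} (hr : 0 < r) (hκ : κ = 1 / (1 + r)) 
    (hc : 2 * |c| ≤ Z + U) (hZ : 0 ≤ Z) (hU : 0 ≤ U) :
    2 * c - U - 2 * κ * (ρ * c) + ρ * U ≤ (2 * r)⁻¹ * (ρ - 1) ^ 2 + r * (2 + 5 / 2 * Z ^ 2 + 4 * U ^ 2) := by
  have h0 : 0 < κ := by rw [hκ]; positivity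
  have h1 : κ ≤ 1 := by rw [hκ, div_le_one (by positivity)]; linarith
  have h2 : 1 - κ ≤ r := by
    have : κ * (1 + r) = 1 := by rw [hκ]; field_simp
    nlinarith
  have h3 : 2 * c - U - 2 * κ * (ρ * c) + ρ * U = 2 * ((1 - κ) - κ * (ρ - 1)) * c + (ρ - 1) * U := by ring
  have h4 : |(1 - κ) - κ * (ρ - 1)| ≤ r + |ρ - 1| := by
    refine (abs_sub _ _).trans ?_
    rw [abs_mul, abs_of_nonneg h0.le, abs_of_nonneg (by linarith : 0 ≤ 1 - κ)]
    nlinarith [abs_nonneg (ρ - 1)]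
  have h5 : 2 * ((1 - κ) - κ * (ρ - 1)) * c ≤ (r + |ρ - 1|) * (Z + U) := by
    calc 2 * ((1 - κ) - κ * (ρ - 1)) * c ≤ |2 * ((1 - κ) - κ * (ρ - 1)) * c| := le_abs_self _
      _ = |(1 - κ) - κ * (ρ - 1)| * (2 * |c|) := by rw [abs_mul, abs_mul, abs_two]; ring
      _ ≤ _ := mul_le_mul h4 hc (by positivity) (by positivity)
  have h6 : (ρ - 1) * U ≤ |ρ - 1| * U := mul_le_mul_of_nonneg_right (le_abs_self _) hU
  have h7 : |ρ - 1| * (Z + 2 * U) ≤ (2 * r)⁻¹ * (ρ - 1) ^ 2 + r / 2 * (Z + 2 * U) ^ 2 := by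
    rw [← sq_abs (ρ - 1)]
    have : 0 ≤ (2 * r)⁻¹ * (|ρ - 1| - r * (Z + 2 * U)) ^ 2 := by positivity
    have e : (2 * r)⁻¹ * (|ρ - 1| - r * (Z + 2 * U)) ^ 2 = (2 * r)⁻¹ * |ρ - 1| ^ 2 - |ρ - 1| * (Z + 2 * U) + r / 2 * (Z + 2 * U) ^ 2 := by
      field_simp; ring
    linarith
  have h8 : (Z + 2 * U) ^ 2 ≤ 3 * Z ^ 2 + 6 * U ^ 2 := by nlinarith [sq_nonneg (Z - U)]
  have h9 : Z + U ≤ 2 + Z ^ 2 + U ^ 2 := by nlinarith [sq_nonneg (Z - 1/2), sq_nonneg (U - 1/2)]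
  rw [h3]
  nlinarith [mul_le_mul_of_nonneg_left h8 hr.le, mul_le_mul_of_nonneg_left h9 hr.le]

lemma int_sq_le {α : Type*} [MeasurableSpace α] {μ : Measure α} [IsProbabilityMeasure μ] {d : ℕ} {f : α → Vec d}
    (hf : MemLp f 4 μ) : ∫ x, ‖f x‖ ^ 2 ∂μ ≤ 1 + ∫ x, ‖f x‖ ^ 4 ∂μ := by
  have h1 := (memLp_2_of_4 hf).integrable_norm_pow (p := 2) (by norm_num)
  have h2 := hf.integrable_norm_pow (p := 4) (by norm_num)
  have : ∫ x, (1 + ‖f x‖ ^ 4) ∂μ = 1 + ∫ x, ‖f x‖ ^ 4 ∂μ := by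
    rw [integral_add (integrable_const _) h2]; simp
  rw [← this]
  refine integral_mono h1 ((integrable_const _).add h2) fun x => ?_
  simp only [Pi.add_apply]
  nlinarith [sq_nonneg (‖f x‖ ^ 2 - 1/2)]

set_option maxHeartbeats 1000000 in
lemma gamma {d : ℕ} (hd : 0 < d) (Q : Measure (Vec d)) [IsProbabilityMeasure Q] {a e r : ℝ} (ha : 0 < a)
    (he : 0 < e) (hr : 0 < r) (hr1 : r < 1) (hdr : d * r ^ 2 ≤ 1/2) (hab : e ^ 2 = a ^ 2 * (1 + r)) :
    a⁻¹ ^ 2 * ∫ p, ‖vv Q a (p.1 + a • p.2)‖ ^ 2 ∂(Q.prod (stdGauss d))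
      - e⁻¹ ^ 2 * ∫ p, ‖vv Q e (p.1 + e • p.2)‖ ^ 2 ∂(Q.prod (stdGauss d)) ≤ a⁻¹ ^ 2 * (419 * d ^ 2 * r) := by
  have hva := vv_meas Q a
  have hve := vv_meas Q e
  have hκ : 0 < a / e := by positivity
  have hκ2 : (a / e) ^ 2 = 1 / (1 + r) := by rw [div_pow, hab]; field_simp
  obtain ⟨r1, r2, r3⟩ := rho_sq d hr.le hr1 hdr hκ hκ2
  have m4 := moment4 d hd
  set μ := Q.prod (stdGauss d) with hμ
  set ρ : Vec d × Vec d → ℝ := fun p => rho d (a / e) p.2 with hρ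
  have hρm : Measurable ρ := by rw [hρ]; fun_prop
  have R1 : Integrable (fun p => ρ p ^ 2) μ := r1.comp_snd Q
  have R2 : Integrable ρ μ := r2.comp_snd Q
  have RL : MemLp ρ 2 μ := (memLp_two_iff_integrable_sq hρm.aestronglyMeasurable).2 R1
  have R3' : Integrable (fun p => (ρ p - 1) ^ 2) μ := by
    have := (R1.sub (R2.const_mul 2)).add (integrable_const (1:ℝ))
    refine this.congr (Filter.Eventually.of_forall fun p => ?_)
    simp only [Pi.add_apply, Pi.sub_apply]; ring
  have R3 : ∫ p, (ρ p - 1) ^ 2 ∂μ ≤ 2 * d * r ^ 2 := by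
    refine le_trans (le_of_eq ?_) r3
    have := integral_fun_snd (μ := Q) (ν := stdGauss d) (fun z => (rho d (a / e) z - 1) ^ 2)
    simpa using this
  -- the vectors
  obtain ⟨A4, A4'⟩ := vv_four Q ha
  have E2 : MemLp (fun p : Vec d × Vec d => vv Q e (p.1 + e • p.2)) 2 μ := memLp_2_of_4 (vv_four Q he).1
  have Z4 : MemLp (fun p : Vec d × Vec d => p.2) 4 μ := (memLp_stdGauss d 4 (by simp)).comp_snd _
  have Z2 := memLp_2_of_4 Z4
  set V : Vec d × Vec d → Vec d := fun p => vv Q a (p.1 + a • p.2) with hV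
  set W : Vec d × Vec d → Vec d := fun p => vv Q a (p.1 + e • p.2) with hW
  set E : Vec d × Vec d → Vec d := fun p => vv Q e (p.1 + e • p.2) with hE
  have A4 : MemLp V 4 μ := A4
  have A2 : MemLp V 2 μ := memLp_2_of_4 A4
  have E2 : MemLp E 2 μ := E2
  have Vm : Measurable V := by rw [hV]; fun_prop
  have Wm : Measurable W := by rw [hW]; fun_prop
  have IV4 : Integrable (fun p => (‖V p‖ ^ 2) ^ 2) μ := by
    have := A4.integrable_norm_pow (p := 4) (by norm_num)
    refine this.congr (Filter.Eventually.of_forall fun p => ?_)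
    simp only []; ring
  have IZ4 : Integrable (fun p : Vec d × Vec d => (‖p.2‖ ^ 2) ^ 2) μ := by
    have := Z4.integrable_norm_pow (p := 4) (by norm_num)
    refine this.congr (Filter.Eventually.of_forall fun p => ?_)
    simp only []; ring
  have V4 : ∫ p, (‖V p‖ ^ 2) ^ 2 ∂μ ≤ 64 * d ^ 2 := by
    refine le_trans (le_of_eq ?_) (A4'.trans m4)
    congr 1; ext p; rw [hV]; ring
  have Z4' : ∫ p : Vec d × Vec d, (‖p.2‖ ^ 2) ^ 2 ∂μ ≤ 64 * d ^ 2 := by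
    refine le_trans (le_of_eq ?_) m4
    have := integral_fun_snd (μ := Q) (ν := stdGauss d) (fun z => ‖z‖ ^ 4)
    simp only [probReal_univ, one_smul] at this
    rw [← this]
    congr 1; ext p; ring
  have VsqL : MemLp (fun p => ‖V p‖ ^ 2) 2 μ :=
    (memLp_two_iff_integrable_sq (by fun_prop)).2 IV4
  have ZsqL : MemLp (fun p : Vec d × Vec d => ‖p.2‖ ^ 2) 2 μ :=
    (memLp_two_iff_integrable_sq (by fun_prop)).2 IZ4
  have IzV := memLp_inner Z2 A2
  have cm : ∀ p : Vec d × Vec d, 2 * |inner ℝ p.2 (V p)| ≤ ‖p.2‖ ^ 2 + ‖V p‖ ^ 2 := fun p => by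
    have := abs_real_inner_le_norm p.2 (V p)
    nlinarith [sq_nonneg (‖p.2‖ - ‖V p‖)]
  have IrV : Integrable (fun p => ρ p * ‖V p‖ ^ 2) μ := RL.integrable_mul VsqL
  have IrZ : Integrable (fun p => ρ p * ‖p.2‖ ^ 2) μ := RL.integrable_mul ZsqL
  have IrzV : Integrable (fun p => ρ p * inner ℝ p.2 (V p)) μ := by
    refine (IrV.add IrZ).mono' (hρm.mul (measurable_snd.inner Vm)).aestronglyMeasurable
      (Filter.Eventually.of_forall fun p => ?_)
    have h0 : 0 ≤ ρ p := rho_nonneg hκ _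
    simp only [Pi.add_apply]
    rw [Real.norm_eq_abs, abs_mul, abs_of_nonneg h0]
    nlinarith [mul_le_mul_of_nonneg_left (cm p) h0, abs_nonneg (inner ℝ p.2 (V p))]
  -- change of measure
  have c1 := change_int Q ha he (F := fun q => ‖vv Q a (q.1 + q.2)‖ ^ 2) (by fun_prop)
  have c2 := change_int Q ha he (F := fun q => inner ℝ q.2 (vv Q a (q.1 + q.2))) (measurable_snd.inner (by fun_prop))
  have W2 : MemLp W 2 μ := (memLp_two_iff_integrable_sq_norm Wm.aestronglyMeasurable).2 (c1.2.2 IrV)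
  have c1' : ∫ p, ‖W p‖ ^ 2 ∂μ = ∫ p, ρ p * ‖V p‖ ^ 2 ∂μ := c1.1
  have c2' : ∫ p, inner ℝ p.2 (W p) ∂μ = a / e * ∫ p, ρ p * inner ℝ p.2 (V p) ∂μ := by
    have c := c2.1
    simp only [real_inner_smul_left] at c
    rw [integral_const_mul] at c
    have : ∫ p, ρ p * (a * inner ℝ p.2 (V p)) ∂μ = a * ∫ p, ρ p * inner ℝ p.2 (V p) ∂μ := by
      rw [← integral_const_mul]; congr 1; ext p; ring
    have c' : e * ∫ p, inner ℝ p.2 (W p) ∂μ = a * ∫ p, ρ p * inner ℝ p.2 (V p) ∂μ := c.trans this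
    rw [div_mul_eq_mul_div, eq_div_iff he.ne', mul_comm, c']
  have o1 : ∫ p, inner ℝ p.2 (W p) ∂μ = ∫ p, inner ℝ (E p) (W p) ∂μ :=
    orth Q he hva (memLp_inner Z2 W2) (memLp_inner E2 W2)
  have o2 : ∫ p, inner ℝ p.2 (V p) ∂μ = ∫ p, ‖V p‖ ^ 2 ∂μ := by
    refine (orth Q ha hva (memLp_inner Z2 A2) (memLp_inner A2 A2)).trans ?_
    simp_rw [real_inner_self_eq_norm_sq]; rfl
  have pos : 0 ≤ ∫ p, ‖e⁻¹ • E p - a⁻¹ • W p‖ ^ 2 ∂μ := integral_nonneg fun p => by positivity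
  rw [int_norm_lin E2 W2, ← o1, c2', c1'] at pos
  have IV2 := A2.integrable_norm_pow (p := 2) (by norm_num)
  have fin : ∫ p, (2 * inner ℝ p.2 (V p) - ‖V p‖ ^ 2 - 2 * (a / e) ^ 2 * (ρ p * inner ℝ p.2 (V p)) + ρ p * ‖V p‖ ^ 2) ∂μ
      ≤ ∫ p, ((2 * r)⁻¹ * (ρ p - 1) ^ 2 + r * (2 + 5 / 2 * (‖p.2‖ ^ 2) ^ 2 + 4 * (‖V p‖ ^ 2) ^ 2)) ∂μ := by
    refine integral_mono ((((IzV.const_mul 2).sub IV2).sub (IrzV.const_mul _)).add IrV)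
      ((R3'.const_mul _).add ((((integrable_const _).add (IZ4.const_mul _)).add (IV4.const_mul _)).const_mul _))
      fun p => pt_ineq hr hκ2 (cm p) (by positivity) (by positivity)
  have l : ∫ p, (2 * inner ℝ p.2 (V p) - ‖V p‖ ^ 2 - 2 * (a / e) ^ 2 * (ρ p * inner ℝ p.2 (V p)) + ρ p * ‖V p‖ ^ 2) ∂μ
      = 2 * ∫ p, inner ℝ p.2 (V p) ∂μ - ∫ p, ‖V p‖ ^ 2 ∂μ - 2 * (a / e) ^ 2 * ∫ p, ρ p * inner ℝ p.2 (V p) ∂μ + ∫ p, ρ p * ‖V p‖ ^ 2 ∂μ := by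
    rw [integral_add _ IrV, integral_sub _ (IrzV.const_mul _), integral_sub (IzV.const_mul 2) IV2,
      integral_const_mul, integral_const_mul]
    · exact (IzV.const_mul 2).sub IV2
    · exact ((IzV.const_mul 2).sub IV2).sub (IrzV.const_mul _)
  have rr : ∫ p, ((2 * r)⁻¹ * (ρ p - 1) ^ 2 + r * (2 + 5 / 2 * (‖p.2‖ ^ 2) ^ 2 + 4 * (‖V p‖ ^ 2) ^ 2)) ∂μ
      = (2 * r)⁻¹ * ∫ p, (ρ p - 1) ^ 2 ∂μ + r * (2 + 5 / 2 * ∫ p : Vec d × Vec d, (‖p.2‖ ^ 2) ^ 2 ∂μ + 4 * ∫ p, (‖V p‖ ^ 2) ^ 2 ∂μ) := by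
    have i1 : Integrable (fun p : Vec d × Vec d => (2:ℝ) + 5 / 2 * (‖p.2‖ ^ 2) ^ 2) μ := (integrable_const _).add (IZ4.const_mul _)
    have i2 : Integrable (fun p => 2 + 5 / 2 * (‖p.2‖ ^ 2) ^ 2 + 4 * (‖V p‖ ^ 2) ^ 2) μ := i1.add (IV4.const_mul _)
    rw [integral_add (R3'.const_mul _) (i2.const_mul _), integral_const_mul, integral_const_mul,
      integral_add i1 (IV4.const_mul _), integral_add (integrable_const _) (IZ4.const_mul _), integral_const_mul,
      integral_const_mul]
    simp
  rw [l, rr, o2] at fin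
  have hd1 : (1:ℝ) ≤ d := by exact_mod_cast hd
  have b1 : (2 * r)⁻¹ * ∫ p, (ρ p - 1) ^ 2 ∂μ ≤ d * r := by
    calc (2 * r)⁻¹ * ∫ p, (ρ p - 1) ^ 2 ∂μ ≤ (2 * r)⁻¹ * (2 * d * r ^ 2) := by gcongr
      _ = d * r := by field_simp
  have b2 : r * (2 + 5 / 2 * ∫ p : Vec d × Vec d, (‖p.2‖ ^ 2) ^ 2 ∂μ + 4 * ∫ p, (‖V p‖ ^ 2) ^ 2 ∂μ) ≤
      r * (2 + 5 / 2 * (64 * d ^ 2) + 4 * (64 * d ^ 2)) := by gcongr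
  have b3 : d * r + r * (2 + 5 / 2 * (64 * d ^ 2) + 4 * (64 * d ^ 2)) ≤ 419 * d ^ 2 * r := by
    nlinarith [mul_le_mul_of_nonneg_left (show (d:ℝ) ≤ d ^ 2 by nlinarith) hr.le, mul_le_mul_of_nonneg_left (show (1:ℝ) ≤ d ^ 2 by nlinarith) hr.le]
  have b4 := fin.trans ((add_le_add b1 b2).trans b3)
  have b5 := mul_le_mul_of_nonneg_left b4 (sq_nonneg a⁻¹)
  have k1 : a⁻¹ ^ 2 * (a / e) ^ 2 = e⁻¹ ^ 2 := by field_simp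
  have k2 : 2 * e⁻¹ * a⁻¹ * (a / e) = 2 * e⁻¹ ^ 2 := by field_simp
  have k3 : ∀ X : ℝ, 2 * e⁻¹ * a⁻¹ * ((a / e) * X) = 2 * e⁻¹ ^ 2 * X := fun X => by rw [← mul_assoc, k2]
  rw [k3] at pos
  have k4 : ∀ m X Y : ℝ, a⁻¹ ^ 2 * (2 * m - m - 2 * (a / e) ^ 2 * X + Y) = a⁻¹ ^ 2 * m - 2 * e⁻¹ ^ 2 * X + a⁻¹ ^ 2 * Y :=
    fun m X Y => by rw [← k1]; ring
  rw [k4] at b5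
  linarith

set_option maxHeartbeats 400000 in
lemma core {d : ℕ} (hd : 0 < d) (Q : Measure (Vec d)) [IsProbabilityMeasure Q] {a b e r : ℝ} (ha : 0 < a)
    (he : 0 < e) (hr : 0 < r) (hr1 : r < 1) (hdr : d * r ^ 2 ≤ 1/2) (hab : e ^ 2 = a ^ 2 * (1 + r))
    (hb : b ^ 2 = a ^ 2 * r) (c : ℝ) :
    ∫ ω, ‖-a⁻¹ • vv Q a (ω.1 + a • ω.2.1) - (-c * e⁻¹) • vv Q e (ω.1 + a • ω.2.1 + b • ω.2.2)‖ ^ 2 ∂(coupleMeasure d Q)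
      ≤ 2 * (a⁻¹ ^ 2 * (419 * d ^ 2 * r)) + 2 * ((c - 1) ^ 2 * e⁻¹ ^ 2 * (65 * d ^ 2)) := by
  have hd1 : (1:ℝ) ≤ d := by exact_mod_cast hd
  obtain ⟨x1, x2, x3⟩ := cross Q (b := b) ha he (by rw [hb, hab]; ring)
  have hA : MemLp (fun p : Vec d × Vec d => vv Q a (p.1 + a • p.2)) 2 (Q.prod (stdGauss d)) :=
    memLp_2_of_4 (vv_four Q ha).1
  have hπ := mp_proj Q
  have hV : MemLp (fun ω : Vec d × Vec d × Vec d => vv Q a (ω.1 + a • ω.2.1)) 2 (coupleMeasure d Q) :=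
    memLp_mp (f := fun p : Vec d × Vec d => vv Q a (p.1 + a • p.2)) (φ := fun ω : Vec d × Vec d × Vec d => (ω.1, ω.2.1)) hA hπ
  have g := gamma hd Q ha he hr hr1 hdr hab
  have e4 := (int_sq_le (vv_four Q he).1).trans (add_le_add_right ((vv_four Q he).2.trans (moment4 d hd)) 1)
  have s : ∫ ω, ‖vv Q a (ω.1 + a • ω.2.1)‖ ^ 2 ∂(coupleMeasure d Q) =
      ∫ p, ‖vv Q a (p.1 + a • p.2)‖ ^ 2 ∂(Q.prod (stdGauss d)) := by
    rw [← hπ.map_eq, integral_map (by fun_prop)]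
    rw [hπ.map_eq]
    exact (hA.integrable_norm_pow (p := 2) (by norm_num)).1
  have D := int_norm_lin hV x2 a⁻¹ e⁻¹
  rw [x1, x3, s] at D
  have k : ∀ m : ℝ, 2 * a⁻¹ * e⁻¹ * (a / e * m) = 2 * e⁻¹ ^ 2 * m := fun m => by field_simp
  rw [k] at D
  have I1 : Integrable (fun ω : Vec d × Vec d × Vec d => ‖a⁻¹ • vv Q a (ω.1 + a • ω.2.1) - e⁻¹ • vv Q e (ω.1 + a • ω.2.1 + b • ω.2.2)‖ ^ 2) (coupleMeasure d Q) :=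
    ((hV.const_smul a⁻¹).sub (x2.const_smul e⁻¹)).integrable_norm_pow (p := 2) (by norm_num)
  have I2 := x2.integrable_norm_pow (p := 2) (by norm_num)
  calc _ ≤ ∫ ω, (2 * ‖a⁻¹ • vv Q a (ω.1 + a • ω.2.1) - e⁻¹ • vv Q e (ω.1 + a • ω.2.1 + b • ω.2.2)‖ ^ 2
        + 2 * ((c - 1) ^ 2 * e⁻¹ ^ 2) * ‖vv Q e (ω.1 + a • ω.2.1 + b • ω.2.2)‖ ^ 2) ∂(coupleMeasure d Q) := by
        refine integral_mono_of_nonneg (Filter.Eventually.of_forall fun ω => by positivity)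
          ((I1.const_mul _).add (I2.const_mul _)) (Filter.Eventually.of_forall fun ω => ?_)
        simp only []
        generalize vv Q a (ω.1 + a • ω.2.1) = V
        generalize vv Q e (ω.1 + a • ω.2.1 + b • ω.2.2) = U
        have h1 : -a⁻¹ • V - (-c * e⁻¹) • U = ((c - 1) * e⁻¹) • U - (a⁻¹ • V - e⁻¹ • U) := by module
        have h2 : ‖((c - 1) * e⁻¹) • U‖ ^ 2 = (c - 1) ^ 2 * e⁻¹ ^ 2 * ‖U‖ ^ 2 := by
          rw [norm_smul, mul_pow, Real.norm_eq_abs, sq_abs, mul_pow]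
        rw [h1]
        have h3 := norm_sub_le (((c - 1) * e⁻¹) • U) (a⁻¹ • V - e⁻¹ • U)
        have h4 : ‖((c - 1) * e⁻¹) • U - (a⁻¹ • V - e⁻¹ • U)‖ ^ 2 ≤ (‖((c - 1) * e⁻¹) • U‖ + ‖a⁻¹ • V - e⁻¹ • U‖) ^ 2 := by gcongr
        nlinarith [sq_nonneg (‖((c - 1) * e⁻¹) • U‖ - ‖a⁻¹ • V - e⁻¹ • U‖)]
    _ ≤ _ := by
        rw [integral_add (I1.const_mul _) (I2.const_mul _), integral_const_mul, integral_const_mul, D, x3]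
        have e5 : ∫ p, ‖vv Q e (p.1 + e • p.2)‖ ^ 2 ∂(Q.prod (stdGauss d)) ≤ 65 * d ^ 2 := by nlinarith
        have e6 := mul_le_mul_of_nonneg_left e5 (show 0 ≤ (c - 1) ^ 2 * e⁻¹ ^ 2 by positivity)
        nlinarith

lemma exp_bd {v : ℝ} (hv : 0 < v) (s : ℝ) : Real.exp (-s ^ 2 / (2 * v)) * s ≤ 1 + 2 * v := by
  have h0 : 0 ≤ s ^ 2 / (2 * v) := by positivity
  have h1 := Real.add_one_le_exp (s ^ 2 / (2 * v))
  have h2 : Real.exp (-s ^ 2 / (2 * v)) * Real.exp (s ^ 2 / (2 * v)) = 1 := by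
    rw [← Real.exp_add]; ring_nf; simp
  have hp := Real.exp_pos (-s ^ 2 / (2 * v))
  have h3 : s ≤ 1 + 2 * v * (s ^ 2 / (2 * v)) := by
    have : 2 * v * (s ^ 2 / (2 * v)) = s ^ 2 := by field_simp
    rw [this]; nlinarith [sq_nonneg (s - 1/2)]
  have h4 : s ≤ (1 + 2 * v) * Real.exp (s ^ 2 / (2 * v)) := by nlinarith
  calc _ ≤ Real.exp (-s ^ 2 / (2 * v)) * ((1 + 2 * v) * Real.exp (s ^ 2 / (2 * v))) := by gcongr
    _ = (1 + 2 * v) * (Real.exp (-s ^ 2 / (2 * v)) * Real.exp (s ^ 2 / (2 * v))) := by ring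
    _ = _ := by rw [h2, mul_one]

lemma score_raw {d : ℕ} (P : Measure (Vec d)) [IsProbabilityMeasure P] (α : ℝ) {v c : ℝ} (hv : 0 < v) (hc : 0 < c)
    (x : Vec d) :
    scoreOf (fun x => c * ∫ y, Real.exp (-‖x - α • y‖ ^ 2 / (2 * v)) ∂P) x =
      (∫ y, Real.exp (-‖x - α • y‖ ^ 2 / (2 * v)) ∂P)⁻¹ •
        ∫ y, (Real.exp (-‖x - α • y‖ ^ 2 / (2 * v)) • (-v⁻¹ • (x - α • y))) ∂P := by
  have hF : ∀ x : Vec d, Integrable (fun y => Real.exp (-‖x - α • y‖ ^ 2 / (2 * v))) P := fun x => by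
    refine Integrable.of_bound (C := 1) (Continuous.aestronglyMeasurable (by fun_prop)) 
      (Filter.Eventually.of_forall fun y => ?_)
    rw [Real.norm_eq_abs, abs_of_pos (Real.exp_pos _), Real.exp_le_one_iff]
    exact div_nonpos_of_nonpos_of_nonneg (by simp) (by positivity)
  have bd : ∀ x y : Vec d, ‖Real.exp (-‖x - α • y‖ ^ 2 / (2 * v)) • (-v⁻¹ • (x - α • y))‖ ≤ v⁻¹ * (1 + 2 * v) := by
    intro x y
    rw [norm_smul, norm_smul, Real.norm_eq_abs, abs_of_pos (Real.exp_pos _), norm_neg, norm_inv, Real.norm_eq_abs, abs_of_pos hv]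
    have := exp_bd hv ‖x - α • y‖
    calc _ = v⁻¹ * (Real.exp (-‖x - α • y‖ ^ 2 / (2 * v)) * ‖x - α • y‖) := by ring
      _ ≤ _ := by gcongr
  have hG : Integrable (fun y => Real.exp (-‖x - α • y‖ ^ 2 / (2 * v)) • (-v⁻¹ • (x - α • y))) P := 
    Integrable.of_bound (C := v⁻¹ * (1 + 2 * v)) (Continuous.aestronglyMeasurable (by fun_prop)) 
      (Filter.Eventually.of_forall fun y => bd x y)
  have key := hasFDerivAt_integral_of_dominated_of_fderiv_le (μ := P) (𝕜 := ℝ) (s := Set.univ) (x₀ := x)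
    (F := fun x y => Real.exp (-‖x - α • y‖ ^ 2 / (2 * v)))
    (F' := fun x y => innerSL ℝ (Real.exp (-‖x - α • y‖ ^ 2 / (2 * v)) • (-v⁻¹ • (x - α • y))))
    (bound := fun _ => v⁻¹ * (1 + 2 * v)) Filter.univ_mem
    (Filter.Eventually.of_forall fun x => (hF x).1) (hF x)
    (Continuous.aestronglyMeasurable ((innerSL ℝ).continuous.comp (by fun_prop)))
    (Filter.Eventually.of_forall fun y x _ => by rw [innerSL_apply_norm]; exact bd x y)
    (integrable_const _)
    (Filter.Eventually.of_forall fun y x _ => by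
      have h1 : HasFDerivAt (fun x : Vec d => ‖x - α • y‖ ^ 2) (2 • innerSL ℝ (x - α • y)) x := by
        have := ((hasFDerivAt_id x).sub_const (α • y)).norm_sq
        simpa using this
      have h2 := ((h1.const_mul (-(2 * v)⁻¹))).exp
      refine (h2.congr_fderiv ?_).congr_of_eventuallyEq (Filter.Eventually.of_forall fun z => ?_)
      · ext w
        simp [inner_smul_left]
        field_simp
      · simp only []; congr 1; field_simp)
  rw [ContinuousLinearMap.integral_comp_comm _ hG] at key
  have hpos : 0 < ∫ y, Real.exp (-‖x - α • y‖ ^ 2 / (2 * v)) ∂P := by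
    have := integral_exp_pos (f := fun y => -‖x - α • y‖ ^ 2 / (2 * v)) (hF x)
    exact this
  have k2 := (key.const_mul c).log (by positivity)
  unfold scoreOf
  refine HasGradientAt.gradient ?_
  rw [hasGradientAt_iff_hasFDerivAt]
  refine k2.congr_fderiv ?_
  ext w
  have hcc : (c * ∫ y, Real.exp (-‖x - α • y‖ ^ 2 / (2 * v)) ∂P)⁻¹ * c = (∫ y, Real.exp (-‖x - α • y‖ ^ 2 / (2 * v)) ∂P)⁻¹ := by
    rw [mul_inv, mul_comm, ← mul_assoc, mul_inv_cancel₀ hc.ne', one_mul]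
  rw [smul_smul, hcc, InnerProductSpace.toDual_apply_apply, real_inner_smul_left]
  rfl

lemma score_eq {d : ℕ} (P : Measure (Vec d)) [IsProbabilityMeasure P] (α : ℝ) {α' v β e c : ℝ} (hβ : 0 < β)
    (he : 0 < e) (hc : 0 < c) (hα : α' = β * α) (hv : v = β ^ 2 * e ^ 2) (x : Vec d) :
    scoreOf (fun x => c * ∫ y, Real.exp (-‖x - α' • y‖ ^ 2 / (2 * v)) ∂P) (β • x) =
      (-β⁻¹ * e⁻¹) • vv (P.map (fun y => α • y)) e x := by
  rw [score_raw P α' (by rw [hv]; positivity) hc]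
  have h1 : ∀ y : Vec d, β • x - α' • y = β • (x - α • y) := fun y => by rw [hα]; module
  have h2 : ∀ y : Vec d, -‖β • (x - α • y)‖ ^ 2 / (2 * v) = -‖x - α • y‖ ^ 2 / (2 * e ^ 2) := fun y => by
    rw [hv, norm_smul, Real.norm_eq_abs, abs_of_pos hβ]; field_simp
  simp only [h1, h2]
  unfold vv
  rw [integral_map (by fun_prop) (Continuous.aestronglyMeasurable (by fun_prop)),
    integral_map (by fun_prop) (Continuous.aestronglyMeasurable (by fun_prop))]
  have h3 : ∀ y : Vec d, Real.exp (-‖x - α • y‖ ^ 2 / (2 * e ^ 2)) • (-v⁻¹ • β • (x - α • y)) =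
      (-v⁻¹ * β) • (Real.exp (-‖x - α • y‖ ^ 2 / (2 * e ^ 2)) • (x - α • y)) := fun y => by module
  have h4 : ∀ y : Vec d, nd d e (x - α • y) • (e⁻¹ • (x - α • y)) =
      ((e ^ d)⁻¹ * (2 * π) ^ (-(d : ℝ) / 2) * e⁻¹) • (Real.exp (-‖x - α • y‖ ^ 2 / (2 * e ^ 2)) • (x - α • y)) := fun y => by
    unfold nd; module
  have h5 : ∀ y : Vec d, nd d e (x - α • y) = 
      ((e ^ d)⁻¹ * (2 * π) ^ (-(d : ℝ) / 2)) * Real.exp (-‖x - α • y‖ ^ 2 / (2 * e ^ 2)) := fun y => by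
    unfold nd; ring
  simp only [h3, h4]
  simp only [h5]
  rw [integral_smul, integral_smul, integral_const_mul, smul_smul, smul_smul, smul_smul]
  congr 1
  rw [hv]
  have hp : (0:ℝ) < (2 * π) ^ (-(d : ℝ) / 2) := by positivity
  have hp2 : 0 < (e ^ d)⁻¹ * (2 * π) ^ (-(d : ℝ) / 2) := by positivity
  generalize (e ^ d)⁻¹ * (2 * π) ^ (-(d : ℝ) / 2) = q at hp2
  generalize (∫ y : Vec d, Real.exp (-‖x - α • y‖ ^ 2 / (2 * e ^ 2)) ∂P) = m
  by_cases hm : m = 0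
  · simp [hm]
  field_simp

lemma exp_small {x : ℝ} (h0 : 0 ≤ x) (h1 : x ≤ 1 / 2) : Real.exp x - 1 ≤ 2 * x := by
  have h := Real.one_sub_le_exp_neg x
  have h2 : Real.exp (-x) * Real.exp x = 1 := by rw [← Real.exp_add]; simp
  have h3 := Real.exp_pos x
  have h4 : (1 - x) * Real.exp x ≤ 1 := by nlinarith
  have h5 : Real.exp x ≤ 1 / (1 - x) := by rw [le_div_iff₀ (by linarith)]; linarith
  have h6 : 1 / (1 - x) ≤ 1 + 2 * x := by rw [div_le_iff₀ (by linarith)]; nlinarith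
  linarith

lemma mp_couple {d : ℕ} (P : Measure (Vec d)) [IsProbabilityMeasure P] (α : ℝ) :
    MeasurePreserving (fun ω : Vec d × Vec d × Vec d => (α • ω.1, ω.2)) (coupleMeasure d P)
      (coupleMeasure d (P.map (fun y => α • y))) := by
  have : IsProbabilityMeasure (P.map (fun y => α • y)) := Measure.isProbabilityMeasure_map (by fun_prop)
  have h1 : MeasurePreserving (fun y : Vec d => α • y) P (P.map (fun y => α • y)) := ⟨by fun_prop, rfl⟩
  exact h1.prod (MeasurePreserving.id ((stdGauss d).prod (stdGauss d)))

set_option maxHeartbeats 400000 in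
lemma perT {d : ℕ} (hd : 0 < d) (P : Measure (Vec d)) [IsProbabilityMeasure P] (g : ℝ → ℝ) (t s : ℝ)
    (hG : 0 < Gvar g t s) (hadd : Gvar g 0 s = Gvar g 0 t + Gvar g t s) (hGt : 0 < Gvar g 0 t)
    (hsm : Gvar g t s / sigmaSq g t ≤ 1 / (2000 * d)) :
    ∫ ω, ‖fwdScore d P g t (xt d g t ω) - fwdScore d P g s (xts d g t s ω)‖ ^ 2 ∂(coupleMeasure d P) ≤
      1806 * d ^ 2 * (Gvar g t s / sigmaSq g t ^ 2) := by
  have hd1 : (1:ℝ) ≤ d := by exact_mod_cast hd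
  set G := Gvar g t s with hGdef
  set σ := sigmaSq g t with hσdef
  have hσ0 : 0 < σ := by
    rw [hσdef, sigmaSq, sub_pos, Real.exp_lt_one_iff]; linarith
  have hσ1 : σ < 1 := by
    rw [hσdef, sigmaSq]; linarith [Real.exp_pos (-(Gvar g 0 t))]
  have hsm2 : G ≤ σ * (1 / (2000 * d)) := by rw [div_le_iff₀ hσ0] at hsm; linarith
  have hd2 : 1 / (2000 * (d:ℝ)) ≤ 1 / 2000 := by
    apply one_div_le_one_div_of_le <;> nlinarith
  have hd3 : (0:ℝ) < 1 / (2000 * (d:ℝ)) := by positivity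
  have hG2 : G ≤ 1 / 2000 := by nlinarith
  set r := (Real.exp G - 1) / σ with hrdef
  have hE0 : 0 < Real.exp G - 1 := by rw [sub_pos, Real.one_lt_exp_iff]; exact hG
  have hE1 : Real.exp G - 1 ≤ 2 * G := exp_small hG.le (by linarith)
  have hr : 0 < r := by positivity
  have hr2 : r ≤ 2 * (G / σ) := by
    rw [hrdef, mul_div_assoc']; gcongr
  have hr3 : r ≤ 2 * (1 / (2000 * d)) := by linarith
  have hr1 : r < 1 := by linarith
  have hdr : d * r ^ 2 ≤ 1 / 2 := by
    have : r ^ 2 ≤ (2 * (1 / (2000 * d))) * 1 := by nlinarith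
    calc d * r ^ 2 ≤ d * ((2 * (1 / (2000 * d))) * 1) := by gcongr
      _ = 1 / 1000 := by field_simp; norm_num
      _ ≤ 1 / 2 := by norm_num
  set a := Real.sqrt σ with hadef
  have ha : 0 < a := Real.sqrt_pos.2 hσ0
  have ha2 : a ^ 2 = σ := Real.sq_sqrt hσ0.le
  set e := Real.sqrt (σ * (1 + r)) with hedef
  have he : 0 < e := Real.sqrt_pos.2 (by positivity)
  have he2 : e ^ 2 = σ * (1 + r) := Real.sq_sqrt (by positivity)
  set β := alphaF g t s with hβdef
  have hβ : 0 < β := Real.exp_pos _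
  have hβ2 : β ^ 2 * Real.exp G = 1 := by
    rw [hβdef, alphaF, ← hGdef, ← Real.exp_nat_mul, ← Real.exp_add]; simp; ring
  have hβ2' : β ^ 2 ≤ 1 := by nlinarith [sq_nonneg β]
  set b := Real.sqrt (1 - β ^ 2) / β with hbdef
  have hbβ : β * b = Real.sqrt (1 - β ^ 2) := by rw [hbdef]; field_simp
  have hσr : σ * r = Real.exp G - 1 := by rw [hrdef]; field_simp
  have hb2 : b ^ 2 = a ^ 2 * r := by
    rw [ha2, hσr, hbdef, div_pow, Real.sq_sqrt (by linarith), div_eq_iff (by positivity)]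
    linarith
  set α := alphaF g 0 t with hαdef
  set Q := P.map (fun y => α • y) with hQ
  have hQp : IsProbabilityMeasure Q := Measure.isProbabilityMeasure_map (by fun_prop)
  have hαs : alphaF g 0 s = β * α := by
    rw [hβdef, hαdef, alphaF, alphaF, alphaF, ← Real.exp_add, hadd, ← hGdef]; ring_nf
  have hσs : sigmaSq g s = β ^ 2 * e ^ 2 := by
    rw [he2, mul_add, hσr, mul_one]
    have h1 : β ^ 2 * (σ + (Real.exp G - 1)) = β ^ 2 * Real.exp G - β ^ 2 * Real.exp (-(Gvar g 0 t)) := by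
      rw [hσdef, sigmaSq]; ring
    have h2 : β ^ 2 = Real.exp (-G) := by
      rw [Real.exp_neg]; exact eq_inv_of_mul_eq_one_left hβ2
    rw [h1, hβ2, h2, ← Real.exp_add, sigmaSq, hadd]; ring_nf
  have hsc1 : ∀ x, fwdScore d P g t x = -a⁻¹ • vv Q a x := fun x => by
    have := score_eq P α (α' := α) (v := σ) (β := 1) (e := a) (c := (2 * π * σ) ^ (-(d : ℝ) / 2)) one_pos ha
      (by positivity) (by ring) (by rw [ha2]; ring) x
    rw [one_smul] at this
    unfold fwdScore forwardDensity
    rw [← hσdef, ← hαdef, this]; simp [hQ]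
  have hsc2 : ∀ x, fwdScore d P g s (β • x) = (-β⁻¹ * e⁻¹) • vv Q e x := fun x => 
    score_eq P α (c := (2 * π * sigmaSq g s) ^ (-(d : ℝ) / 2)) hβ he 
      (by rw [hσs]; positivity) hαs hσs x
  have hxts : ∀ ω, xts d g t s ω = β • (α • ω.1 + a • ω.2.1 + b • ω.2.2) := fun ω => by
    rw [xts, xt, ← hβdef, ← hσdef, ← hαdef, ← hadef, ← hbβ, mul_smul, ← smul_add]
  have hxt : ∀ ω, xt d g t ω = α • ω.1 + a • ω.2.1 := fun ω => rfl
  simp only [hxts, hsc2, hsc1, hxt]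
  have hva := vv_meas Q a
  have hve := vv_meas Q e
  have mp := mp_couple P α
  have c0 := core hd Q (b := b) ha he hr hr1 hdr (by rw [he2, ha2]) hb2 β⁻¹
  rw [← mp.map_eq, integral_map (by fun_prop) (Measurable.aestronglyMeasurable (by fun_prop))] at c0
  refine c0.trans ?_
  have f1 : a⁻¹ ^ 2 * (419 * d ^ 2 * r) ≤ 838 * d ^ 2 * (G / σ ^ 2) := by
    rw [inv_pow, ha2]
    calc σ⁻¹ * (419 * d ^ 2 * r) ≤ σ⁻¹ * (419 * d ^ 2 * (2 * (G / σ))) := by gcongr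
      _ = _ := by field_simp; norm_num
  have f2 : (β⁻¹ - 1) ^ 2 ≤ G := by
    have h1 : β⁻¹ = Real.exp (G / 2) := by
      rw [hβdef, alphaF, ← Real.exp_neg, ← hGdef]; ring_nf
    have h2 := exp_small (x := G / 2) (by positivity) (by linarith)
    have h3 := Real.add_one_le_exp (G / 2)
    rw [h1]
    nlinarith
  have f3 : e⁻¹ ^ 2 ≤ 1 / σ ^ 2 := by
    rw [inv_pow, he2, inv_eq_one_div]
    apply one_div_le_one_div_of_le (by positivity)
    nlinarith [mul_pos hσ0 hr]
  have f4 : (β⁻¹ - 1) ^ 2 * e⁻¹ ^ 2 * (65 * d ^ 2) ≤ G * (1 / σ ^ 2) * (65 * d ^ 2) := by gcongr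
  have f5 : G * (1 / σ ^ 2) * (65 * d ^ 2) = 65 * d ^ 2 * (G / σ ^ 2) := by ring
  linarith

lemma Gvar_facts {g : ℝ → ℝ} {T : ℝ} (hg : ContinuousOn g (Set.Icc 0 T)) (hp : ∀ u ∈ Set.Ioc (0 : ℝ) T, 0 < g u)
    {p q : ℝ} (h0 : 0 ≤ p) (hpq : p < q) (hq : q ≤ T) :
    IntervalIntegrable (fun u => g u ^ 2) volume p q ∧ 0 < Gvar g p q := by
  have hc : ContinuousOn (fun u => g u ^ 2) (Set.Icc p q) :=
    (hg.mono (Set.Icc_subset_Icc h0 hq)).pow 2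
  refine ⟨hc.intervalIntegrable_of_Icc hpq.le, ?_⟩
  unfold Gvar
  refine intervalIntegral.intervalIntegral_pos_of_pos_on (hc.intervalIntegrable_of_Icc hpq.le) (fun u hu => ?_) hpq
  have := hp u ⟨lt_of_le_of_lt h0 hu.1, hu.2.le.trans hq⟩
  positivity

lemma Gvar_add {g : ℝ → ℝ} {T : ℝ} (hg : ContinuousOn g (Set.Icc 0 T)) (hp : ∀ u ∈ Set.Ioc (0 : ℝ) T, 0 < g u)
    {p q r : ℝ} (h0 : 0 ≤ p) (hpq : p < q) (hqr : q < r) (hr : r ≤ T) :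
    Gvar g p r = Gvar g p q + Gvar g q r :=
  (intervalIntegral.integral_add_adjacent_intervals (Gvar_facts hg hp h0 hpq (hqr.le.trans hr)).1
    (Gvar_facts hg hp (h0.trans hpq.le) hqr hr).1).symm

lemma perK {d : ℕ} (hd : 0 < d) (P : Measure (Vec d)) [IsProbabilityMeasure P] {g : ℝ → ℝ} {T p q : ℝ}
    (hg : ContinuousOn g (Set.Icc 0 T)) (hp : ∀ u ∈ Set.Ioc (0 : ℝ) T, 0 < g u)
    (h0 : 0 < p) (hpq : p < q) (hq : q ≤ T) (hsm : Gvar g p q / sigmaSq g p ≤ 1 / (2000 * d)) :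
    ∫ t in p..q, (g t) ^ 2 *
      ∫ ω, ‖fwdScore d P g t (xt d g t ω) - fwdScore d P g q (xts d g t q ω)‖ ^ 2 ∂(coupleMeasure d P) ≤
      2000 * d ^ 2 * ((Gvar g p q) ^ 2 / (sigmaSq g p) ^ 2) := by
  have hGpq := Gvar_facts hg hp h0.le hpq hq
  have hGp := Gvar_facts hg hp le_rfl h0 (hpq.le.trans hq)
  have hσp : 0 < sigmaSq g p := by
    rw [sigmaSq, sub_pos, Real.exp_lt_one_iff]; linarith [hGp.2]
  by_cases hi : IntervalIntegrable (fun t => (g t) ^ 2 *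
      ∫ ω, ‖fwdScore d P g t (xt d g t ω) - fwdScore d P g q (xts d g t q ω)‖ ^ 2 ∂(coupleMeasure d P)) volume p q
  swap
  · rw [intervalIntegral.integral_undef hi]; positivity
  have key : ∀ t ∈ Set.Ioo p q, (g t) ^ 2 *
      ∫ ω, ‖fwdScore d P g t (xt d g t ω) - fwdScore d P g q (xts d g t q ω)‖ ^ 2 ∂(coupleMeasure d P) ≤
      (g t) ^ 2 * (1806 * d ^ 2 * (Gvar g p q / sigmaSq g p ^ 2)) := by
    intro t ht
    have ht0 : 0 < t := h0.trans ht.1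
    have hGtq := Gvar_facts hg hp ht0.le ht.2 hq
    have hGpt := Gvar_facts hg hp h0.le ht.1 (ht.2.le.trans hq)
    have hGt := Gvar_facts hg hp le_rfl ht0 (ht.2.le.trans hq)
    have e1 := Gvar_add hg hp h0.le ht.1 ht.2 hq
    have e2 := Gvar_add hg hp le_rfl ht0 ht.2 hq
    have e3 := Gvar_add hg hp le_rfl h0 ht.1 (ht.2.le.trans hq)
    have hσ : sigmaSq g p ≤ sigmaSq g t := by
      unfold sigmaSq
      have : Real.exp (-Gvar g 0 t) ≤ Real.exp (-Gvar g 0 p) := Real.exp_le_exp.2 (by linarith [hGpt.2])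
      linarith
    have hGle : Gvar g t q ≤ Gvar g p q := by linarith [hGpt.2]
    have hsm' : Gvar g t q / sigmaSq g t ≤ 1 / (2000 * d) := by
      refine le_trans ?_ hsm
      have := hGpq.2.le
      gcongr
    refine mul_le_mul_of_nonneg_left ((perT hd P g t q hGtq.2 e2 hGt.2 hsm').trans ?_) (sq_nonneg _)
    have := hGpq.2.le
    gcongr
  have mono := intervalIntegral.integral_mono_on_of_le_Ioo hpq.le hi (hGpq.1.mul_const _) key
  refine mono.trans ?_
  rw [intervalIntegral.integral_mul_const]
  change Gvar g p q * _ ≤ _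
  have : Gvar g p q * (1806 * d ^ 2 * (Gvar g p q / sigmaSq g p ^ 2)) = 1806 * (d ^ 2 * ((Gvar g p q) ^ 2 / (sigmaSq g p) ^ 2)) := by ring
  have h2 : 0 ≤ d ^ 2 * ((Gvar g p q) ^ 2 / (sigmaSq g p) ^ 2) := by positivity
  rw [this, mul_assoc]
  linarith

/-- Lemma `early-discrete`: total discretization error of the score in the
early-stopping setting, without smoothness assumptions. -/
theorem statement13 :
    ∃ K : ℝ, 0 < K ∧
      ∀ (d N : ℕ) (T δ : ℝ) (P : Measure (Vec d)) (g : ℝ → ℝ) (tp : ℕ → ℝ),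
        IsProbabilityMeasure P → 0 < N →
        ContinuousOn g (Set.Icc 0 T) → (∀ u ∈ Set.Ioc (0 : ℝ) T, 0 < g u) →
        tp 0 = δ → 0 < δ → tp N = T → (∀ k < N, tp k < tp (k + 1)) →
        -- step-size condition `G_k / σ_{t_{k−1}}² ≤ 1/(K·d)`
        (∀ k < N, Gvar g (tp k) (tp (k + 1)) / sigmaSq g (tp k) ≤ 1 / (K * d)) →
        (∑ k ∈ Finset.range N, ∫ t in tp k..tp (k + 1),
            (g t) ^ 2 *
              ∫ ω, ‖fwdScore d P g t (xt d g t ω) -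
                  fwdScore d P g (tp (k + 1)) (xts d g t (tp (k + 1)) ω)‖ ^ 2
                ∂(coupleMeasure d P)) ≤
          K * d ^ 2 * ∑ k ∈ Finset.range N,
            (Gvar g (tp k) (tp (k + 1))) ^ 2 / (sigmaSq g (tp k)) ^ 2 := by
  refine ⟨2000, by norm_num, ?_⟩
  intro d N T δ P g tp hP hN hg hp h0 hδ hT hmono hsm
  rcases Nat.eq_zero_or_pos d with hd | hd
  · subst hd
    have hz : ∀ v w : Vec 0, ‖v - w‖ ^ 2 = 0 := fun v w => by
      rw [Subsingleton.elim v w]; simp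
    simp [hz]
  have inc : ∀ k, k ≤ N → 0 < tp k := by
    intro k
    induction k with
    | zero => intro _; rw [h0]; exact hδ
    | succ k ih => intro hk; exact (ih (by omega)).trans (hmono k (by omega))
  have dec : ∀ j, j ≤ N → tp (N - j) ≤ T := by
    intro j
    induction j with
    | zero => intro _; rw [Nat.sub_zero, hT]
    | succ j ih =>
      intro hj
      have h1 := hmono (N - (j + 1)) (by omega)
      rw [show N - (j + 1) + 1 = N - j by omega] at h1
      exact h1.le.trans (ih (by omega))
  rw [Finset.mul_sum]
  refine Finset.sum_le_sum fun k hk => ?_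
  have hk' : k < N := Finset.mem_range.1 hk
  have hT' : tp (k + 1) ≤ T := by
    have := dec (N - (k + 1)) (by omega)
    rwa [show N - (N - (k + 1)) = k + 1 by omega] at this
  exact perK hd P hg hp (inc k hk'.le) (hmono k hk') hT' (hsm k hk')

end DiffusionKL
end
end

section
/- Let K ≥ 2, g ≡ 1, 0 < δ < 1, c ≤ 1/(K·d), and let the discretization points t₀ = δ < t₁ < ⋯ < t_N = T be defined by the exponentially decreasing-then-constant step sizes h_k := t_k − t_{k−1} = c·min{t_k, 1}. Then there is a universal constant C > 0 such that G_k/σ_{t_{k−1}}² ≤ C/(K·d) for every k = 1,…,N, the quantity Π := Σ_{k=1}^N G_k²/σ_{t_{k−1}}⁴ satisfies Π ≤ C·c·(log(1/δ) + T), and the number of steps satisfies N ≤ C·(log(1/δ) + T)/c. -/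
open MeasureTheory Real

noncomputable section

namespace DiffusionKL

/-- Lemma `quant-exp`: quantitative bounds for the constant variance
function `g ≡ 1` with exponentially-decreasing-then-constant step sizes
`h_k = c·min{t_k, 1}`. With `g ≡ 1` we have `G_k = t_k − t_{k−1}` and
`σ_t² = 1 − e^{−t}`. -/
theorem statement15 :
    ∃ C : ℝ, 0 < C ∧
      ∀ (K : ℝ) (d N : ℕ) (c δ T : ℝ) (tp : ℕ → ℝ),
        2 ≤ K → 0 < d → 0 < N →
        0 < c → c ≤ 1 / (K * d) →
        0 < δ → δ < 1 →
        tp 0 = δ → tp N = T →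
        (∀ k, 1 ≤ k → k ≤ N → tp k - tp (k - 1) = c * min (tp k) 1) →
        -- `G_k / σ_{t_{k−1}}² ≤ C/(K·d)` for every `k = 1, …, N`
        (∀ k, 1 ≤ k → k ≤ N →
          (tp k - tp (k - 1)) / (1 - Real.exp (-(tp (k - 1)))) ≤ C / (K * d)) ∧
        -- `Π = Σ_{k=1}^N G_k²/σ_{t_{k−1}}⁴ ≤ C·c·(log(1/δ) + T)`
        (∑ k ∈ Finset.range N,
            (tp (k + 1) - tp k) ^ 2 / (1 - Real.exp (-(tp k))) ^ 2) ≤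
          C * c * (Real.log (1 / δ) + T) ∧
        -- the number of steps satisfies `N ≤ C·(log(1/δ) + T)/c`
        (N : ℝ) ≤ C * (Real.log (1 / δ) + T) / c := by
  refine ⟨32, by norm_num, ?_⟩
  intro K d N c δ T tp hK hd hN hc hcK hδ hδ1 h0 hT hstep
  have hd1 : (1 : ℝ) ≤ d := by exact_mod_cast hd
  have hKd : 2 ≤ K * d := by nlinarith
  have hc2 : c ≤ 1 / 2 := hcK.trans (one_div_le_one_div_of_le (by norm_num) hKd)
  have hs : ∀ k, k < N → tp (k + 1) - tp k = c * min (tp (k + 1)) 1 := fun k hk => by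
    simpa using hstep (k + 1) (by omega) (by omega)
  have hpos : ∀ k, k ≤ N → 0 < tp k := by
    intro k
    induction k with
    | zero => intro _; rw [h0]; exact hδ
    | succ k ih =>
      intro hk
      have h1 := ih (by omega)
      have h2 := hs k (by omega)
      by_contra hneg
      push Not at hneg
      rw [min_eq_left (by linarith)] at h2
      nlinarith
  -- the ratio bound
  have hratio : ∀ k, k < N →
      0 ≤ (tp (k + 1) - tp k) / (1 - Real.exp (-(tp k))) ∧
      (tp (k + 1) - tp k) / (1 - Real.exp (-(tp k))) ≤ 4 * c := by
    intro k hk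
    have h1 := hpos k (by omega)
    have h2 := hpos (k + 1) (by omega)
    have h3 := hs k hk
    have hm : min (tp (k + 1)) 1 ≤ 2 * min (tp k) 1 := by
      have h4 : min (tp (k + 1)) 1 ≤ tp (k + 1) := min_le_left _ _
      have h5 : tp (k + 1) ≤ 2 * tp k := by nlinarith
      rcases le_total (tp k) 1 with h | h
      · rw [min_eq_left h]; linarith
      · rw [min_eq_right h]; linarith [min_le_right (tp (k + 1)) 1]
    have hmp : 0 < min (tp (k + 1)) 1 := lt_min h2 one_pos
    have hsig : min (tp k) 1 / 2 ≤ 1 - Real.exp (-(tp k)) := by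
      have he : Real.exp (-(tp k)) ≤ 1 / (1 + tp k) := by
        rw [Real.exp_neg, ← one_div]
        exact one_div_le_one_div_of_le (by linarith) (by linarith [Real.add_one_le_exp (tp k)])
      have h6 : 1 / (1 + tp k) ≤ 1 - min (tp k) 1 / 2 := by
        rw [div_le_iff₀ (by linarith)]
        rcases le_total (tp k) 1 with h | h
        · rw [min_eq_left h]; nlinarith
        · rw [min_eq_right h]; nlinarith
      linarith
    have hsp : 0 < 1 - Real.exp (-(tp k)) := by linarith
    rw [h3]
    refine ⟨by positivity, ?_⟩
    rw [div_le_iff₀ hsp]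
    nlinarith
  have hKd0 : 0 < K * d := by linarith
  -- the potential bound
  have hpot : ∀ k, k ≤ N → (k : ℝ) * c ≤ Real.log (tp k) + tp k - Real.log δ - δ := by
    intro k
    induction k with
    | zero => intro _; simp [h0]
    | succ k ih =>
      intro hk
      have i1 := ih (by omega)
      have h1 := hpos k (by omega)
      have h2 := hpos (k + 1) hk
      have h3 := hs k (by omega)
      push_cast
      have hlog : 1 - tp k / tp (k + 1) ≤ Real.log (tp (k + 1)) - Real.log (tp k) := by
        have h4 := Real.log_le_sub_one_of_pos (div_pos h1 h2)
        rw [Real.log_div h1.ne' h2.ne'] at h4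
        linarith
      rcases le_total (tp (k + 1)) 1 with h | h
      · rw [min_eq_left h] at h3
        have h5 : 1 - tp k / tp (k + 1) = c := by
          field_simp
          linarith
        nlinarith
      · rw [min_eq_right h] at h3
        have h5 : Real.log (tp k) ≤ Real.log (tp (k + 1)) :=
          Real.log_le_log h1 (by linarith)
        linarith
  have hNc : (N : ℝ) * c ≤ 2 * (Real.log (1 / δ) + T) := by
    have h1 := hpot N le_rfl
    have h2 := hpos N le_rfl
    rw [hT] at h1 h2
    have h3 := Real.log_le_sub_one_of_pos h2
    have h4 : Real.log δ < 0 := Real.log_neg hδ hδ1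
    rw [one_div, Real.log_inv]
    linarith
  have hN0 : (0 : ℝ) ≤ N := Nat.cast_nonneg N
  refine ⟨?_, ?_, ?_⟩
  · intro k hk1 hkN
    have h := (hratio (k - 1) (by omega)).2
    rw [Nat.sub_add_cancel hk1] at h
    refine h.trans ?_
    have h1 : c * (K * d) ≤ 1 := by rwa [le_div_iff₀ hKd0] at hcK
    rw [le_div_iff₀ hKd0]
    nlinarith
  · have h1 : (∑ k ∈ Finset.range N,
            (tp (k + 1) - tp k) ^ 2 / (1 - Real.exp (-(tp k))) ^ 2) ≤
          ∑ k ∈ Finset.range N, (4 * c) ^ 2 := by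
      refine Finset.sum_le_sum fun k hk => ?_
      obtain ⟨ha, hb⟩ := hratio k (Finset.mem_range.mp hk)
      rw [← div_pow]
      exact pow_le_pow_left₀ ha hb 2
    refine h1.trans ?_
    rw [Finset.sum_const, Finset.card_range, nsmul_eq_mul]
    nlinarith [mul_le_mul_of_nonneg_left hNc hc.le]
  · rw [le_div_iff₀ hc]
    nlinarith [mul_nonneg hN0 hc.le]

end DiffusionKL
end
end

section
/- Let P be a probability measure on ℝ^d, μ ≠ 0 and σ > 0, and let p_{μ,σ} be the density of μY + σZ where Y ∼ P and Z ∼ N(0,I_d) are independent, i.e., p_{μ,σ}(x) = (2πσ²)^{−d/2}∫ exp(−‖x−μy‖²/(2σ²)) dP(y). Let P̃_{μ,σ}(·|x) be the probability measure with dP̃_{μ,σ}(y|x) ∝ exp(−‖x−μy‖²/(2σ²)) dP(y). Then: (1) for every x ∈ ℝ^d, ∇log p_{μ,σ}(x) = E_{y∼P̃_{μ,σ}(·|x)}[(μy − x)/σ²]; and (2) if moreover P admits a density p ∈ C¹(ℝ^d) (with the integration by parts justified, e.g. p and ∇p integrable against the Gaussian kernel), then ∇log p_{μ,σ}(x) =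 (1/μ)·E_{y∼P̃_{μ,σ}(·|x)}[∇log p(y)]. -/
open MeasureTheory Real

noncomputable section

namespace DiffusionKL

/-- The Gaussian kernel. -/
def gk {d : ℕ} (μ σ : ℝ) (x y : Vec d) : ℝ := Real.exp (-‖x - μ • y‖ ^ 2 / (2 * σ ^ 2))

/-- The kernel times the conditional score. -/
def gV {d : ℕ} (μ σ : ℝ) (x y : Vec d) : Vec d := gk μ σ x y • (σ ^ 2)⁻¹ • (μ • y - x)

lemma gk_pos {d : ℕ} (μ σ : ℝ) (x y : Vec d) : 0 < gk μ σ x y := Real.exp_pos _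

lemma gk_le_one {d : ℕ} (μ σ : ℝ) (x y : Vec d) : gk μ σ x y ≤ 1 := by
  unfold gk
  apply Real.exp_le_one_iff.2
  apply div_nonpos_of_nonpos_of_nonneg
  · simp
  · positivity

lemma gk_continuous {d : ℕ} (μ σ : ℝ) (x : Vec d) : Continuous (gk μ σ x) := by
  unfold gk; fun_prop

lemma gV_continuous {d : ℕ} (μ σ : ℝ) (x : Vec d) : Continuous (gV μ σ x) := by
  have := gk_continuous μ σ x
  unfold gV; fun_prop

lemma gV_norm {d : ℕ} (μ σ : ℝ) (hσ : 0 < σ) (x y : Vec d) : ‖gV μ σ x y‖ ≤ σ⁻¹ := by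
  unfold gV
  rw [norm_smul, norm_smul, norm_sub_rev, Real.norm_of_nonneg (gk_pos μ σ x y).le,
    Real.norm_of_nonneg (by positivity)]
  unfold gk
  set r := ‖x - μ • y‖ with hr
  have h1 : r / σ ≤ Real.exp (r ^ 2 / (2 * σ ^ 2)) := by
    have h2 := Real.add_one_le_exp (r ^ 2 / (2 * σ ^ 2))
    have h3 : r ^ 2 / (2 * σ ^ 2) = (r / σ) ^ 2 / 2 := by field_simp
    nlinarith [sq_nonneg (r / σ - 1)]
  have h4 : Real.exp (-r ^ 2 / (2 * σ ^ 2)) = (Real.exp (r ^ 2 / (2 * σ ^ 2)))⁻¹ := by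
    rw [← Real.exp_neg]; congr 1; ring
  rw [h4]
  have h5 : (Real.exp (r ^ 2 / (2 * σ ^ 2)))⁻¹ * ((σ ^ 2)⁻¹ * r)
      = σ⁻¹ * ((Real.exp (r ^ 2 / (2 * σ ^ 2)))⁻¹ * (r / σ)) := by field_simp
  rw [h5]
  have h6 : (Real.exp (r ^ 2 / (2 * σ ^ 2)))⁻¹ * (r / σ) ≤ 1 := by
    rw [inv_mul_le_iff₀ (Real.exp_pos _)]; simpa using h1
  have : 0 < σ⁻¹ := by positivity
  nlinarith

lemma gk_hasFDerivAt_left {d : ℕ} (μ σ : ℝ) (hσ : 0 < σ) (x y : Vec d) :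
    HasFDerivAt (fun z => gk μ σ z y) (innerSL ℝ (gV μ σ x y)) x := by
  have h := ((((hasFDerivAt_id x).sub_const (μ • y)).norm_sq.neg).mul_const
    ((2 * σ ^ 2)⁻¹)).exp
  unfold gk
  simp only [div_eq_mul_inv]
  refine h.congr_fderiv ?_
  ext v
  simp [gV, gk, inner_smul_left, inner_sub_left, div_eq_mul_inv]
  field_simp
  ring

lemma gk_hasFDerivAt_right {d : ℕ} (μ σ : ℝ) (hσ : 0 < σ) (x y : Vec d) :
    HasFDerivAt (fun z => gk μ σ x z) ((-μ) • innerSL ℝ (gV μ σ x y)) y := by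
  have h := (((((hasFDerivAt_id y).const_smul μ).const_sub x).norm_sq.neg).mul_const
    ((2 * σ ^ 2)⁻¹)).exp
  unfold gk
  simp only [div_eq_mul_inv]
  refine h.congr_fderiv ?_
  ext v
  simp [gV, gk, inner_smul_left, inner_sub_left, div_eq_mul_inv]
  field_simp
  ring

lemma gk_integrable {d : ℕ} (μ σ : ℝ) (P : Measure (Vec d)) [IsProbabilityMeasure P] (x : Vec d) :
    Integrable (gk μ σ x) P := by
  refine Integrable.of_bound (gk_continuous μ σ x).aestronglyMeasurable 1 (ae_of_all _ fun y => ?_)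
  rw [Real.norm_of_nonneg (gk_pos μ σ x y).le]
  exact gk_le_one μ σ x y

lemma gV_integrable {d : ℕ} (μ σ : ℝ) (hσ : 0 < σ) (P : Measure (Vec d)) [IsProbabilityMeasure P]
    (x : Vec d) : Integrable (gV μ σ x) P :=
  Integrable.of_bound (gV_continuous μ σ x).aestronglyMeasurable _
    (ae_of_all _ fun y => gV_norm μ σ hσ x y)

lemma gk_int_pos {d : ℕ} (μ σ : ℝ) (P : Measure (Vec d)) [IsProbabilityMeasure P] (x : Vec d) :
    0 < ∫ y, gk μ σ x y ∂P := by
  rw [integral_pos_iff_support_of_nonneg (fun y => (gk_pos μ σ x y).le) (gk_integrable μ σ P x)]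
  have : Function.support (gk μ σ x) = Set.univ := by
    ext y; simp [(gk_pos μ σ x y).ne']
  rw [this]; simp

lemma int_tilt {d : ℕ} (μ σ : ℝ) (P : Measure (Vec d)) [IsProbabilityMeasure P] (x : Vec d)
    (f : Vec d → Vec d) :
    ∫ y, f y ∂(tiltMeasure d P μ σ x) = (∫ y, gk μ σ x y ∂P)⁻¹ • ∫ y, gk μ σ x y • f y ∂P := by
  have hm : Measurable (fun y => ENNReal.ofReal (gk μ σ x y)) :=
    (gk_continuous μ σ x).measurable.ennreal_ofReal
  change ∫ y, f y ∂(((P.withDensity (fun y => ENNReal.ofReal (gk μ σ x y))) Set.univ)⁻¹ •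
    P.withDensity (fun y => ENNReal.ofReal (gk μ σ x y))) = _
  rw [integral_smul_measure, integral_withDensity_eq_integral_toReal_smul hm (by simp)]
  simp only [ENNReal.toReal_ofReal (gk_pos μ σ x _).le]
  congr 1
  rw [withDensity_apply _ MeasurableSet.univ, Measure.restrict_univ, ENNReal.toReal_inv,
    ← ofReal_integral_eq_lintegral_ofReal (gk_integrable μ σ P x)
      (ae_of_all _ fun y => (gk_pos μ σ x y).le), ENNReal.toReal_ofReal (gk_int_pos μ σ P x).le]

lemma grad_log_perturb {d : ℕ} (μ σ : ℝ) (hσ : 0 < σ) (P : Measure (Vec d))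
    [IsProbabilityMeasure P] (x : Vec d) :
    gradient (fun z => Real.log (perturbDensity' d P μ σ z)) x =
      (∫ y, gk μ σ x y ∂P)⁻¹ • ∫ y, gV μ σ x y ∂P := by
  apply HasGradientAt.gradient
  rw [hasGradientAt_iff_hasFDerivAt]
  have h1 : HasFDerivAt (fun z => ∫ y, gk μ σ z y ∂P) (∫ y, innerSL ℝ (gV μ σ x y) ∂P) x := by
    refine hasFDerivAt_integral_of_dominated_of_fderiv_le
      (F' := fun z y => innerSL ℝ (gV μ σ z y)) (bound := fun _ => σ⁻¹)
      Filter.univ_mem ?_ (gk_integrable μ σ P x) ?_ ?_ (integrable_const _) ?_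
    · exact Filter.Eventually.of_forall fun z => (gk_continuous μ σ z).aestronglyMeasurable
    · exact ((innerSL ℝ).continuous.comp (gV_continuous μ σ x)).aestronglyMeasurable
    · refine ae_of_all _ fun y z _ => ?_
      rw [innerSL_apply_norm]
      exact gV_norm μ σ hσ z y
    · exact ae_of_all _ fun y z _ => gk_hasFDerivAt_left μ σ hσ z y
  have hI := gk_int_pos μ σ P x
  have hc : (0 : ℝ) < (2 * π * σ ^ 2) ^ (-(d : ℝ) / 2) := by positivity
  have h2 := (h1.const_mul ((2 * π * σ ^ 2) ^ (-(d : ℝ) / 2))).log (by positivity)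
  refine h2.congr_fderiv ?_
  have h3 : ∫ y, innerSL ℝ (gV μ σ x y) ∂P = innerSL ℝ (∫ y, gV μ σ x y ∂P) :=
    (innerSL ℝ).integral_comp_comm (gV_integrable μ σ hσ P x)
  rw [h3]
  ext v
  simp [inner_smul_left]
  field_simp

/-- Regularised positive part. -/
def rp (ε t : ℝ) : ℝ := (max t 0) ^ 2 / (max t 0 + ε)

/-- Derivative of the regularised positive part. -/
def rpD (ε t : ℝ) : ℝ := 1 - ε ^ 2 / (max t 0 + ε) ^ 2

lemma rp_hasDerivAt (ε t : ℝ) (hε : 0 < ε) : HasDerivAt (rp ε) (rpD ε t) t := by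
  rcases lt_trichotomy t 0 with h | h | h
  · have h1 : rpD ε t = 0 := by
      simp [rpD, max_eq_right h.le, hε.ne']
    rw [h1]
    refine (hasDerivAt_const t (0 : ℝ)).congr_of_eventuallyEq ?_
    filter_upwards [Iio_mem_nhds h] with s hs
    simp [rp, max_eq_right (le_of_lt (Set.mem_Iio.1 hs))]
  · subst h
    have h1 : rpD ε 0 = 0 := by simp [rpD, hε.ne']
    rw [h1, hasDerivAt_iff_isLittleO_nhds_zero]
    have : (fun h : ℝ => rp ε (0 + h) - rp ε 0 - h • (0 : ℝ)) =O[nhds 0] fun h : ℝ => h ^ 2 := by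
      refine Asymptotics.IsBigO.of_bound ε⁻¹ (Filter.Eventually.of_forall fun s => ?_)
      have hm : (0 : ℝ) ≤ max s 0 := le_max_right _ _
      have h2 : max s 0 ^ 2 ≤ s ^ 2 := by
        rcases le_total s 0 with h | h
        · rw [max_eq_right h]; nlinarith [sq_nonneg s]
        · rw [max_eq_left h]
      simp only [rp, zero_add, max_self, smul_zero, sub_zero, ne_eq, OfNat.ofNat_ne_zero,
        not_false_eq_true, zero_pow, zero_div]
      rw [Real.norm_of_nonneg (by positivity), Real.norm_of_nonneg (by positivity),
        inv_mul_eq_div]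
      gcongr
      linarith
    exact this.trans_isLittleO (by simpa using Asymptotics.isLittleO_pow_id (𝕜 := ℝ) one_lt_two)
  · have h0 : t + ε ≠ 0 := by positivity
    have h1 := ((hasDerivAt_pow 2 t).div ((hasDerivAt_id t).add_const ε) h0)
    refine (h1.congr_deriv ?_).congr_of_eventuallyEq ?_
    · simp only [rpD, max_eq_left h.le, id]
      field_simp
      simp
      ring
    · filter_upwards [Ioi_mem_nhds h] with s hs
      simp [rp, max_eq_left (le_of_lt (Set.mem_Ioi.1 hs))]

lemma rpD_mem (ε t : ℝ) (hε : 0 < ε) : ‖rpD ε t‖ ≤ 1 := by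
  have hm : (0 : ℝ) ≤ max t 0 := le_max_right _ _
  have h1 : ε ^ 2 / (max t 0 + ε) ^ 2 ≤ 1 := by
    rw [div_le_one (by positivity)]; gcongr; linarith
  have h2 : 0 ≤ ε ^ 2 / (max t 0 + ε) ^ 2 := by positivity
  rw [Real.norm_eq_abs, abs_le, rpD]
  constructor <;> linarith

lemma rp_nonneg (ε t : ℝ) (hε : 0 < ε) : 0 ≤ rp ε t := by
  have hm : (0 : ℝ) ≤ max t 0 := le_max_right _ _
  unfold rp; positivity

lemma rp_le (ε t : ℝ) (hε : 0 < ε) : rp ε t ≤ max t 0 := by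
  have hm : (0 : ℝ) ≤ max t 0 := le_max_right _ _
  unfold rp
  rw [div_le_iff₀ (by positivity)]
  nlinarith

lemma rp_tendsto (t : ℝ) :
    Filter.Tendsto (fun ε => rp ε t) (nhdsWithin 0 (Set.Ioi 0)) (nhds (max t 0)) := by
  rcases le_or_gt t 0 with h | h
  · simp [rp, max_eq_right h]
  · have : ContinuousAt (fun ε => rp ε t) 0 := by
      unfold rp
      rw [max_eq_left h.le]
      refine ContinuousAt.div (by fun_prop) (by fun_prop) (by simpa using h.ne')
    have h2 := this.tendsto
    have h3 : rp 0 t = max t 0 := by simp [rp, max_eq_left h.le]; field_simp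
    rw [h3] at h2
    exact h2.mono_left nhdsWithin_le_nhds

lemma rpD_tendsto (t : ℝ) :
    Filter.Tendsto (fun ε => rpD ε t) (nhdsWithin 0 (Set.Ioi 0))
      (nhds (if 0 < t then 1 else 0)) := by
  rcases le_or_gt t 0 with h | h
  · rw [if_neg h.not_gt]
    refine tendsto_const_nhds.congr' ?_
    filter_upwards [self_mem_nhdsWithin] with ε hε
    have : (ε : ℝ) ≠ 0 := (Set.mem_Ioi.1 hε).ne'
    simp [rpD, max_eq_right h, this]
  · rw [if_pos h]
    have : ContinuousAt (fun ε => rpD ε t) 0 := by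
      unfold rpD
      rw [max_eq_left h.le]
      refine continuousAt_const.sub (ContinuousAt.div (by fun_prop) (by fun_prop) ?_)
      simpa using h.ne'
    have h2 := this.tendsto
    have h3 : rpD 0 t = 1 := by simp [rpD]
    rw [h3] at h2
    exact h2.mono_left nhdsWithin_le_nhds

lemma ibp {d : ℕ} (μ σ : ℝ) (hσ : 0 < σ) (p : Vec d → ℝ) (hp : ContDiff ℝ 1 p)
    (hpi : Integrable (fun y => max (p y) 0)) (x v : Vec d)
    (hg : Integrable (fun y => gk μ σ x y • gradient p y)) :
    ∫ y, gk μ σ x y * ((if 0 < p y then 1 else 0) * fderiv ℝ p y v) =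
      - ∫ y, ((-μ) * inner ℝ (gV μ σ x y) v) * max (p y) 0 := by
  have hpc := hp.continuous
  have hdc : Continuous (fun y => fderiv ℝ p y v) :=
    (hp.continuous_fderiv one_ne_zero).clm_apply continuous_const
  have hKc := gk_continuous μ σ x
  have hVc := gV_continuous μ σ x
  have hgi : Integrable (fun y => gk μ σ x y * fderiv ℝ p y v) := by
    have := hg.inner_const (𝕜 := ℝ) v
    refine this.congr (ae_of_all _ fun y => ?_)
    simp only [inner_smul_left]
    rw [← toDual_gradient]
    simp
  have hrm : ∀ ε, Measurable (rp ε) := fun ε => by unfold rp; fun_prop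
  have hrmD : ∀ ε, Measurable (rpD ε) := fun ε => by unfold rpD; fun_prop
  have hVb : ∀ y, ‖(-μ) * inner ℝ (gV μ σ x y) v‖ ≤ |μ| * (σ⁻¹ * ‖v‖) := fun y => by
    rw [norm_mul, norm_neg, Real.norm_eq_abs]
    gcongr
    refine (norm_inner_le_norm _ _).trans ?_
    gcongr
    exact gV_norm μ σ hσ x y
  have hVi : Integrable (fun y => (|μ| * (σ⁻¹ * ‖v‖)) * max (p y) 0) := hpi.const_mul _
  have b1 : ∀ ε, 0 < ε → ∀ y, ‖gk μ σ x y * (rpD ε (p y) * fderiv ℝ p y v)‖ ≤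
      ‖gk μ σ x y * fderiv ℝ p y v‖ := fun ε hε y => by
    rw [norm_mul, norm_mul, norm_mul]
    have := rpD_mem ε (p y) hε
    gcongr
    exact mul_le_of_le_one_left (norm_nonneg _) this
  have b2 : ∀ ε, 0 < ε → ∀ y, ‖((-μ) * inner ℝ (gV μ σ x y) v) * rp ε (p y)‖ ≤
      (|μ| * (σ⁻¹ * ‖v‖)) * max (p y) 0 := fun ε hε y => by
    rw [norm_mul, Real.norm_of_nonneg (rp_nonneg ε (p y) hε)]
    exact mul_le_mul (hVb y) (rp_le _ _ hε) (rp_nonneg _ _ hε) (by positivity)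
  have m1 : ∀ ε, AEStronglyMeasurable
      (fun y => gk μ σ x y * (rpD ε (p y) * fderiv ℝ p y v)) volume := fun ε =>
    (hKc.measurable.mul (((hrmD ε).comp hpc.measurable).mul hdc.measurable)).aestronglyMeasurable
  have m2 : ∀ ε, AEStronglyMeasurable
      (fun y => ((-μ) * inner ℝ (gV μ σ x y) v) * rp ε (p y)) volume := fun ε => by
    have h : Continuous (fun y => (-μ) * inner ℝ (gV μ σ x y) v) := by fun_prop
    exact (h.measurable.mul ((hrm ε).comp hpc.measurable)).aestronglyMeasurable
  have key : ∀ ε, 0 < ε → ∫ y, gk μ σ x y * (rpD ε (p y) * fderiv ℝ p y v) =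
      - ∫ y, ((-μ) * inner ℝ (gV μ σ x y) v) * rp ε (p y) := fun ε hε => by
    have := integral_bilinear_hasFDerivAt_right_eq_neg_left_of_integrable
      (μ := (volume : Measure (Vec d))) (f := gk μ σ x) (f' := fun y => (-μ) • innerSL ℝ (gV μ σ x y))
      (g := fun y => rp ε (p y)) (g' := fun y => rpD ε (p y) • fderiv ℝ p y) (v := v)
      (B := ContinuousLinearMap.mul ℝ ℝ) ?_ ?_ ?_
      (fun y _ => gk_hasFDerivAt_right μ σ hσ x y)
      (fun y _ => (rp_hasDerivAt ε (p y) hε).comp_hasFDerivAt y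
        (hp.differentiable one_ne_zero y).hasFDerivAt)
    · simpa using this
    · have := hVi.mono' (m2 ε) (ae_of_all _ (b2 ε hε))
      simpa using this
    · have := hgi.mono (m1 ε) (ae_of_all _ (b1 ε hε))
      simpa using this
    · refine hpi.mono' ?_ (ae_of_all _ fun y => ?_)
      · exact (hKc.measurable.mul ((hrm ε).comp hpc.measurable)).aestronglyMeasurable
      · simp only [ContinuousLinearMap.mul_apply']
        rw [norm_mul, Real.norm_of_nonneg (rp_nonneg ε (p y) hε),
          Real.norm_of_nonneg (gk_pos μ σ x y).le]
        exact (mul_le_of_le_one_left (rp_nonneg _ _ hε) (gk_le_one _ _ _ _)).trans (rp_le _ _ hε)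
  have t1 := tendsto_integral_filter_of_dominated_convergence
    (l := nhdsWithin (0 : ℝ) (Set.Ioi 0)) (μ := (volume : Measure (Vec d)))
    (F := fun ε y => gk μ σ x y * (rpD ε (p y) * fderiv ℝ p y v))
    (f := fun y => gk μ σ x y * ((if 0 < p y then 1 else 0) * fderiv ℝ p y v))
    (fun y => ‖gk μ σ x y * fderiv ℝ p y v‖)
    (Filter.Eventually.of_forall m1)
    (by filter_upwards [self_mem_nhdsWithin] with ε hε using ae_of_all _ (b1 ε hε))
    hgi.norm
    (ae_of_all _ fun y => ((rpD_tendsto (p y)).mul_const _).const_mul _)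
  have t2 := tendsto_integral_filter_of_dominated_convergence
    (l := nhdsWithin (0 : ℝ) (Set.Ioi 0)) (μ := (volume : Measure (Vec d)))
    (F := fun ε y => ((-μ) * inner ℝ (gV μ σ x y) v) * rp ε (p y))
    (f := fun y => ((-μ) * inner ℝ (gV μ σ x y) v) * max (p y) 0)
    (fun y => (|μ| * (σ⁻¹ * ‖v‖)) * max (p y) 0)
    (Filter.Eventually.of_forall m2)
    (by filter_upwards [self_mem_nhdsWithin] with ε hε using ae_of_all _ (b2 ε hε))
    hVi
    (ae_of_all _ fun y => (rp_tendsto (p y)).const_mul _)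
  refine tendsto_nhds_unique t1 (t2.neg.congr' ?_)
  filter_upwards [self_mem_nhdsWithin] with ε hε using (key ε hε).symm

lemma part2 {d : ℕ} (μ σ : ℝ) (hμ : μ ≠ 0) (hσ : 0 < σ) (P : Measure (Vec d))
    [IsProbabilityMeasure P] (p : Vec d → ℝ)
    (hP : P = volume.withDensity (fun y => ENNReal.ofReal (p y))) (hp : ContDiff ℝ 1 p)
    (x : Vec d) (hg : Integrable (fun y => gk μ σ x y • gradient p y)) :
    ∫ y, gV μ σ x y ∂P = μ⁻¹ • ∫ y, gk μ σ x y • scoreOf p y ∂P := by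
  have hpc := hp.continuous
  have hpm : Measurable (fun y => ENNReal.ofReal (p y)) := hpc.measurable.ennreal_ofReal
  have hpi : Integrable (fun y => max (p y) 0) := by
    refine ⟨(hpc.max continuous_const).aestronglyMeasurable, ?_⟩
    have h1 : (volume.withDensity (fun y => ENNReal.ofReal (p y))) Set.univ = 1 := by
      rw [← hP]; simp
    rw [withDensity_apply _ MeasurableSet.univ, Measure.restrict_univ] at h1
    have h0 : ∀ᵐ y : Vec d, (0 : ℝ) ≤ max (p y) 0 := ae_of_all _ fun y => le_max_right _ _
    rw [hasFiniteIntegral_iff_ofReal h0]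
    have h2 : ∀ y, ENNReal.ofReal (max (p y) 0) = ENNReal.ofReal (p y) := fun y => by
      simp [ENNReal.ofReal_max]
    simp only [h2, h1]
    simp
  have hint : ∀ f : Vec d → Vec d, ∫ y, f y ∂P = ∫ y, max (p y) 0 • f y := fun f => by
    rw [hP, integral_withDensity_eq_integral_toReal_smul hpm (by simp)]
    simp only [ENNReal.toReal_ofReal']
  have hsc : ∀ y, max (p y) 0 • (gk μ σ x y • scoreOf p y) =
      (if 0 < p y then (1 : ℝ) else 0) • (gk μ σ x y • gradient p y) := fun y => by
    rcases le_or_gt (p y) 0 with h | h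
    · simp [max_eq_right h, h.not_gt]
    · have h1 : scoreOf p y = (p y)⁻¹ • gradient p y := by
        apply HasGradientAt.gradient
        rw [hasGradientAt_iff_hasFDerivAt]
        refine ((hp.differentiable one_ne_zero y).hasFDerivAt.log h.ne').congr_fderiv ?_
        rw [← toDual_gradient]
        ext v
        simp [inner_smul_left]
      rw [h1, max_eq_left h.le, if_pos h, smul_comm (gk μ σ x y), smul_smul,
        mul_inv_cancel₀ h.ne']
  rw [hint, hint]
  simp only [hsc]
  have hi1 : Integrable (fun y => max (p y) 0 • gV μ σ x y) := by
    refine (hpi.const_mul σ⁻¹).mono' ?_ (ae_of_all _ fun y => ?_)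
    · exact ((hpc.max continuous_const).smul (gV_continuous μ σ x)).aestronglyMeasurable
    · rw [norm_smul, Real.norm_of_nonneg (le_max_right _ _), mul_comm]
      have := gV_norm μ σ hσ x y
      gcongr
  have hi2 : Integrable (fun y => (if 0 < p y then (1 : ℝ) else 0) •
      (gk μ σ x y • gradient p y)) := by
    refine hg.mono ?_ (ae_of_all _ fun y => ?_)
    · refine AEStronglyMeasurable.fun_smul ?_ hg.1
      exact (Measurable.ite (measurableSet_lt measurable_const hpc.measurable)
        measurable_const measurable_const).aestronglyMeasurable
    · split_ifs <;> simp
  have hib := ibp μ σ hσ p hp hpi x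
  refine ext_inner_left ℝ fun v => ?_
  rw [inner_smul_right, ← integral_inner hi1, ← integral_inner hi2]
  have e1 : ∫ y, inner ℝ v ((if 0 < p y then (1 : ℝ) else 0) • (gk μ σ x y • gradient p y)) =
      ∫ y, gk μ σ x y * ((if 0 < p y then 1 else 0) * fderiv ℝ p y v) := by
    refine integral_congr_ae (ae_of_all _ fun y => ?_)
    simp only [inner_smul_right]
    rw [← toDual_gradient, InnerProductSpace.toDual_apply_apply, real_inner_comm]
    ring
  rw [e1, hib v hg, ← integral_neg, ← integral_const_mul]
  refine integral_congr_ae (ae_of_all _ fun y => ?_)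
  simp only [inner_smul_right]
  rw [real_inner_comm]
  field_simp

/-- Lemma `computing-score`: two representations of the score of the
Gaussian perturbation `p_{μ,σ}` (the density of `μY + σZ`) as conditional expectations
under the tilted measure `P̃_{μ,σ}(·|x)`. -/
theorem statement16 :
    ∀ (d : ℕ) (μ σ : ℝ) (P : Measure (Vec d)),
      IsProbabilityMeasure P → μ ≠ 0 → 0 < σ →
      -- (1) `∇log p_{μ,σ}(x) = E_{y∼P̃}[(μy − x)/σ²]`
      (∀ x : Vec d,
        gradient (fun z => Real.log (perturbDensity' d P μ σ z)) x =
          ∫ y, (σ ^ 2)⁻¹ • (μ • y - x) ∂(tiltMeasure d P μ σ x)) ∧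
      -- (2) if `P` has a `C¹` density `p` with the integration by parts justified, then
      -- `∇log p_{μ,σ}(x) = (1/μ)·E_{y∼P̃}[∇log p(y)]`
      (∀ p : Vec d → ℝ,
        P = MeasureTheory.volume.withDensity (fun y => ENNReal.ofReal (p y)) →
        ContDiff ℝ 1 p →
        (∀ x : Vec d, Integrable
          (fun y => Real.exp (-‖x - μ • y‖ ^ 2 / (2 * σ ^ 2)) • gradient p y)
          MeasureTheory.volume) →
        (∀ x : Vec d, Integrable (fun y => scoreOf p y) (tiltMeasure d P μ σ x)) →
        ∀ x : Vec d,
          gradient (fun z => Real.log (perturbDensity' d P μ σ z)) x =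
            μ⁻¹ • ∫ y, scoreOf p y ∂(tiltMeasure d P μ σ x)) := by
  intro d μ σ P hP hμ hσ
  refine ⟨fun x => ?_, fun p hPp hp hg _ x => ?_⟩
  · rw [grad_log_perturb μ σ hσ P x, int_tilt]
    rfl
  · rw [grad_log_perturb μ σ hσ P x, int_tilt, part2 μ σ hμ hσ P p hPp hp x (hg x), smul_comm]

end DiffusionKL
end
end

section
/- Let P be a probability measure on ℝ^d, σ > 0, and let p_σ be the density of the Gaussian perturbation of P with variance σ². Then E_{X∼p_σ}‖∇log p_σ(X)‖² ≤ d/σ². -/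
open MeasureTheory Real

noncomputable section

namespace DiffusionKL

theorem aux_int_gauss (d : ℕ) {b : ℝ} (hb : 0 < b) :
    Integrable (fun v : Vec d => Real.exp (-b * ‖v‖ ^ 2)) := by
  by_contra h
  have h1 := integral_undef h
  rw [GaussianFourier.integral_rexp_neg_mul_sq_norm hb] at h1
  have : 0 < (π / b) ^ ((Module.finrank ℝ (Vec d) : ℝ) / 2) := by positivity
  linarith

theorem aux_moment_t (d : ℕ) {t : ℝ} (ht : 0 < t) (ht2 : t < 1 / 2) :
    ∫⁻ z : Vec d, ENNReal.ofReal (‖z‖ ^ 2 * ((2 * π) ^ (-(d : ℝ) / 2) * Real.exp (-‖z‖ ^ 2 / 2)))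
      ≤ ENNReal.ofReal (t⁻¹ • ((1 - 2 * (0 + t)) ^ (-(d : ℝ) / 2) - (1 - 2 * (0 : ℝ)) ^ (-(d : ℝ) / 2))) := by
  have hc : 0 < (2 * π) ^ (-(d : ℝ) / 2) := by positivity
  have i1 := aux_int_gauss d (b := 1 / 2 - t) (by linarith)
  have i2 := aux_int_gauss d (b := 1 / 2) (by norm_num)
  have hI : ∫ z : Vec d, t⁻¹ * ((2 * π) ^ (-(d : ℝ) / 2) *
      (Real.exp (-(1 / 2 - t) * ‖z‖ ^ 2) - Real.exp (-(1 / 2) * ‖z‖ ^ 2)))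
      = t⁻¹ • ((1 - 2 * (0 + t)) ^ (-(d : ℝ) / 2) - (1 - 2 * (0 : ℝ)) ^ (-(d : ℝ) / 2)) := by
    rw [integral_const_mul, integral_const_mul, integral_sub i1 i2,
      GaussianFourier.integral_rexp_neg_mul_sq_norm (by linarith),
      GaussianFourier.integral_rexp_neg_mul_sq_norm (by norm_num)]
    have e1 : π / (1 / 2 - t) = (2 * π) * (1 - 2 * t)⁻¹ := by
      have : 1 - 2 * t ≠ 0 := by linarith
      have : 1 / 2 - t ≠ 0 := by linarith
      field_simp
    have e2 : π / (1 / 2) = 2 * π := by ring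
    have h3 : (2 * π) ^ (-(d : ℝ) / 2) * (2 * π) ^ ((d : ℝ) / 2) = 1 := by
      rw [← Real.rpow_add (by positivity)]
      rw [show -(d : ℝ) / 2 + d / 2 = 0 by ring, Real.rpow_zero]
    rw [e1, e2, finrank_euclideanSpace_fin, Real.mul_rpow (by positivity)
      (inv_nonneg.2 (by linarith)), Real.inv_rpow (by linarith), ← Real.rpow_neg (by linarith)]
    rw [smul_eq_mul, zero_add, mul_zero, sub_zero, Real.one_rpow, neg_div]
    rw [neg_div] at h3
    linear_combination (t⁻¹ * ((1 - 2 * t) ^ (-((d : ℝ) / 2)) - 1)) * h3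
  have i3 : Integrable (fun z : Vec d => t⁻¹ * ((2 * π) ^ (-(d : ℝ) / 2) *
      (Real.exp (-(1 / 2 - t) * ‖z‖ ^ 2) - Real.exp (-(1 / 2) * ‖z‖ ^ 2)))) :=
    ((i1.sub i2).const_mul _).const_mul _
  rw [← hI, ofReal_integral_eq_lintegral_ofReal i3]
  · refine lintegral_mono fun z => ENNReal.ofReal_le_ofReal ?_
    have h1 := Real.add_one_le_exp (t * ‖z‖ ^ 2)
    have h2 : Real.exp (-(1 / 2 - t) * ‖z‖ ^ 2)
      = Real.exp (t * ‖z‖ ^ 2) * Real.exp (-(1 / 2) * ‖z‖ ^ 2) := by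
      rw [← Real.exp_add]; congr 1; ring
    rw [h2, show -‖z‖ ^ 2 / 2 = -(1 / 2) * ‖z‖ ^ 2 by ring]
    set e := Real.exp (-(1 / 2) * ‖z‖ ^ 2) with he
    have hep : 0 < e := Real.exp_pos _
    have : t * ‖z‖ ^ 2 * e ≤ Real.exp (t * ‖z‖ ^ 2) * e - e := by nlinarith
    calc ‖z‖ ^ 2 * ((2 * π) ^ (-(d : ℝ) / 2) * e)
        = t⁻¹ * ((2 * π) ^ (-(d : ℝ) / 2) * (t * ‖z‖ ^ 2 * e)) := by field_simp
      _ ≤ _ := by gcongr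
  · refine Filter.Eventually.of_forall fun z => ?_
    have : Real.exp (-(1 / 2) * ‖z‖ ^ 2) ≤ Real.exp (-(1 / 2 - t) * ‖z‖ ^ 2) :=
      Real.exp_le_exp.2 (by nlinarith [sq_nonneg ‖z‖])
    have : 0 ≤ Real.exp (-(1 / 2 - t) * ‖z‖ ^ 2) - Real.exp (-(1 / 2) * ‖z‖ ^ 2) := by linarith
    simp only [Pi.zero_apply]
    exact mul_nonneg (by positivity) (mul_nonneg hc.le this)

theorem aux_moment (d : ℕ) :
    ∫⁻ z : Vec d, ENNReal.ofReal (‖z‖ ^ 2 * ((2 * π) ^ (-(d : ℝ) / 2) * Real.exp (-‖z‖ ^ 2 / 2)))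
      ≤ ENNReal.ofReal d := by
  have hd : HasDerivAt (fun t : ℝ => (1 - 2 * t) ^ (-(d : ℝ) / 2)) (d : ℝ) 0 := by
    have h0 : HasDerivAt (fun t : ℝ => 1 - 2 * t) (-2) 0 := by
      simpa using ((hasDerivAt_id (0 : ℝ)).const_mul 2).const_sub 1
    have := h0.rpow_const (p := -(d : ℝ) / 2) (Or.inl (by norm_num))
    convert this using 1
    simp
    ring
  have h1 := (ENNReal.continuous_ofReal.tendsto _).comp hd.tendsto_slope_zero_right
  refine ge_of_tendsto h1 ?_
  have : Set.Ioo (0 : ℝ) (1 / 2) ∈ nhdsWithin (0 : ℝ) (Set.Ioi 0) :=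
    Ioo_mem_nhdsGT (by norm_num)
  filter_upwards [this] with t ht
  exact aux_moment_t d ht.1 ht.2

theorem aux_exp_bd {σ : ℝ} (hσ : 0 < σ) (u : ℝ) :
    u * Real.exp (-u ^ 2 / (2 * σ ^ 2)) ≤ σ ∧
    u ^ 2 * Real.exp (-u ^ 2 / (2 * σ ^ 2)) ≤ 2 * σ ^ 2 := by
  have h1 := Real.add_one_le_exp (u ^ 2 / (2 * σ ^ 2))
  have h2 : Real.exp (-u ^ 2 / (2 * σ ^ 2)) * Real.exp (u ^ 2 / (2 * σ ^ 2)) = 1 := by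
    rw [← Real.exp_add, neg_div, neg_add_cancel, Real.exp_zero]
  set s := u ^ 2 / (2 * σ ^ 2) with hs
  set e := Real.exp (-u ^ 2 / (2 * σ ^ 2)) with he
  have hep : 0 < e := Real.exp_pos _
  have hu : u ^ 2 = 2 * σ ^ 2 * s := by rw [hs]; field_simp
  have h3 : e * (s + 1) ≤ 1 := (mul_le_mul_of_nonneg_left h1 hep.le).trans h2.le
  have h4 : u ≤ σ * (s + 1) := by
    have : 0 ≤ σ * (σ * (s + 1) - u) := by nlinarith [sq_nonneg (u - σ)]
    have := nonneg_of_mul_nonneg_right this hσ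
    linarith
  constructor
  · calc u * e ≤ σ * (s + 1) * e := by gcongr
      _ = σ * (e * (s + 1)) := by ring
      _ ≤ σ * 1 := by gcongr
      _ = σ := mul_one _
  · rw [hu]
    calc 2 * σ ^ 2 * s * e = 2 * σ ^ 2 * (e * s) := by ring
      _ ≤ 2 * σ ^ 2 * 1 := by gcongr; nlinarith
      _ = _ := mul_one _

theorem aux_int0 (d : ℕ) {σ : ℝ} (hσ : 0 < σ) (P : Measure (Vec d)) [IsProbabilityMeasure P]
    (x : Vec d) : Integrable (fun y => Real.exp (-‖x - y‖ ^ 2 / (2 * σ ^ 2))) P := by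
  refine Integrable.of_bound (by fun_prop) 1 (Filter.Eventually.of_forall fun y => ?_)
  rw [Real.norm_eq_abs, abs_of_pos (Real.exp_pos _), Real.exp_le_one_iff, neg_div]
  have : 0 ≤ ‖x - y‖ ^ 2 / (2 * σ ^ 2) := by positivity
  linarith

theorem aux_int1 (d : ℕ) {σ : ℝ} (hσ : 0 < σ) (P : Measure (Vec d)) [IsProbabilityMeasure P]
    (x : Vec d) : Integrable (fun y => ‖x - y‖ * Real.exp (-‖x - y‖ ^ 2 / (2 * σ ^ 2))) P := by
  refine Integrable.of_bound (by fun_prop) σ (Filter.Eventually.of_forall fun y => ?_)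
  rw [Real.norm_eq_abs, abs_of_nonneg (by positivity)]
  exact (aux_exp_bd hσ _).1

theorem aux_int2 (d : ℕ) {σ : ℝ} (hσ : 0 < σ) (P : Measure (Vec d)) [IsProbabilityMeasure P]
    (x : Vec d) : Integrable (fun y => ‖x - y‖ ^ 2 * Real.exp (-‖x - y‖ ^ 2 / (2 * σ ^ 2))) P := by
  refine Integrable.of_bound (by fun_prop) (2 * σ ^ 2) (Filter.Eventually.of_forall fun y => ?_)
  rw [Real.norm_eq_abs, abs_of_nonneg (by positivity)]
  exact (aux_exp_bd hσ _).2

theorem aux_pos (d : ℕ) {σ : ℝ} (hσ : 0 < σ) (P : Measure (Vec d)) [IsProbabilityMeasure P]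
    (x : Vec d) : 0 < ∫ y, Real.exp (-‖x - y‖ ^ 2 / (2 * σ ^ 2)) ∂P :=
  integral_exp_pos (aux_int0 d hσ P x)

theorem aux_cs (d : ℕ) {σ : ℝ} (hσ : 0 < σ) (P : Measure (Vec d)) [IsProbabilityMeasure P]
    (x : Vec d) :
    (∫ y, ‖x - y‖ * Real.exp (-‖x - y‖ ^ 2 / (2 * σ ^ 2)) ∂P) ^ 2 ≤
      (∫ y, ‖x - y‖ ^ 2 * Real.exp (-‖x - y‖ ^ 2 / (2 * σ ^ 2)) ∂P) *
      ∫ y, Real.exp (-‖x - y‖ ^ 2 / (2 * σ ^ 2)) ∂P := by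
  have hq := aux_pos d hσ P x
  have i0 := aux_int0 d hσ P x
  have i1 := aux_int1 d hσ P x
  have i2 := aux_int2 d hσ P x
  set q := ∫ y, Real.exp (-‖x - y‖ ^ 2 / (2 * σ ^ 2)) ∂P with hqd
  set B := ∫ y, ‖x - y‖ * Real.exp (-‖x - y‖ ^ 2 / (2 * σ ^ 2)) ∂P with hB
  set A := ∫ y, ‖x - y‖ ^ 2 * Real.exp (-‖x - y‖ ^ 2 / (2 * σ ^ 2)) ∂P with hA
  have h : 0 ≤ ∫ y, (q ^ 2 * (‖x - y‖ ^ 2 * Real.exp (-‖x - y‖ ^ 2 / (2 * σ ^ 2)))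
      - (2 * q * B) * (‖x - y‖ * Real.exp (-‖x - y‖ ^ 2 / (2 * σ ^ 2)))
      + B ^ 2 * Real.exp (-‖x - y‖ ^ 2 / (2 * σ ^ 2))) ∂P := by
    refine integral_nonneg fun y => ?_
    simp only [Pi.zero_apply]
    have : 0 ≤ (q * ‖x - y‖ - B) ^ 2 * Real.exp (-‖x - y‖ ^ 2 / (2 * σ ^ 2)) := by positivity
    linarith
  have i3 : Integrable (fun y => q ^ 2 * (‖x - y‖ ^ 2 * Real.exp (-‖x - y‖ ^ 2 / (2 * σ ^ 2)))
      - (2 * q * B) * (‖x - y‖ * Real.exp (-‖x - y‖ ^ 2 / (2 * σ ^ 2)))) P :=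
    (i2.const_mul _).sub (i1.const_mul _)
  rw [integral_add i3 (i0.const_mul _),
    integral_sub (i2.const_mul _) (i1.const_mul _), integral_const_mul, integral_const_mul,
    integral_const_mul, ← hqd, ← hB, ← hA] at h
  have h' : 0 ≤ q * (A * q - B ^ 2) := by linarith
  have := nonneg_of_mul_nonneg_right h' hq
  linarith

theorem aux_fderiv (d : ℕ) {σ : ℝ} (hσ : 0 < σ) (P : Measure (Vec d)) [IsProbabilityMeasure P]
    (x : Vec d) :
    ∃ L : Vec d →L[ℝ] ℝ,
      HasFDerivAt (fun x => ∫ y, Real.exp (-‖x - y‖ ^ 2 / (2 * σ ^ 2)) ∂P) L x ∧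
      ‖L‖ ≤ (σ ^ 2)⁻¹ * ∫ y, ‖x - y‖ * Real.exp (-‖x - y‖ ^ 2 / (2 * σ ^ 2)) ∂P := by
  let F' : Vec d → Vec d → (Vec d →L[ℝ] ℝ) := fun x y =>
    (-(σ ^ 2)⁻¹ * Real.exp (-‖x - y‖ ^ 2 / (2 * σ ^ 2))) • innerSL ℝ (x - y)
  have hn : ∀ x y, ‖F' x y‖ =
      (σ ^ 2)⁻¹ * (‖x - y‖ * Real.exp (-‖x - y‖ ^ 2 / (2 * σ ^ 2))) := by
    intro x y
    simp only [F', norm_smul, innerSL_apply_norm, norm_mul, norm_neg, Real.norm_eq_abs,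
      abs_of_pos (Real.exp_pos _), abs_of_nonneg (inv_nonneg.2 (sq_nonneg σ))]
    ring
  refine ⟨∫ y, F' x y ∂P, ?_, ?_⟩
  · refine hasFDerivAt_integral_of_dominated_of_fderiv_le (F' := F')
      (bound := fun _ => (σ ^ 2)⁻¹ * σ) Filter.univ_mem
      (Filter.Eventually.of_forall fun x => by fun_prop) (aux_int0 d hσ P x) ?_ ?_
      (integrable_const _) ?_
    · have : Continuous (F' x) := by
        simp only [F']; fun_prop
      exact this.aestronglyMeasurable
    · refine Filter.Eventually.of_forall fun y x _ => ?_
      rw [hn]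
      gcongr
      exact (aux_exp_bd hσ _).1
    · refine Filter.Eventually.of_forall fun y x _ => ?_
      have h1 : HasFDerivAt (fun x : Vec d => x - y) (ContinuousLinearMap.id ℝ (Vec d)) x :=
        (hasFDerivAt_id x).sub_const y
      have h2 := ((h1.norm_sq.const_mul (-(2 * σ ^ 2)⁻¹))).exp
      have e : ∀ x : Vec d, -(2 * σ ^ 2)⁻¹ * ‖x - y‖ ^ 2 = -‖x - y‖ ^ 2 / (2 * σ ^ 2) := by
        intro x; ring
      simp only [e] at h2
      refine h2.congr_fderiv ?_
      ext v
      simp [F']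
      ring
  · refine (norm_integral_le_integral_norm _).trans ?_
    simp only [hn]
    rw [integral_const_mul]

theorem aux_score (d : ℕ) {σ : ℝ} (hσ : 0 < σ) (P : Measure (Vec d)) [IsProbabilityMeasure P]
    (x : Vec d) {c : ℝ} (hc : 0 < c) :
    ‖scoreOf (perturbDensity d P σ) x‖ ^ 2 ≤ (σ ^ 4)⁻¹ *
      ((∫ y, ‖x - y‖ ^ 2 * (c * Real.exp (-‖x - y‖ ^ 2 / (2 * σ ^ 2))) ∂P) /
      ∫ y, c * Real.exp (-‖x - y‖ ^ 2 / (2 * σ ^ 2)) ∂P) := by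
  obtain ⟨L, hL, hLn⟩ := aux_fderiv d hσ P x
  have hq := aux_pos d hσ P x
  have hcs := aux_cs d hσ P x
  have hC : 0 < (2 * π * σ ^ 2) ^ (-(d : ℝ) / 2) := by positivity
  have hs : ‖scoreOf (perturbDensity d P σ) x‖
      = (∫ y, Real.exp (-‖x - y‖ ^ 2 / (2 * σ ^ 2)) ∂P)⁻¹ * ‖L‖ := by
    have h1 := (hL.const_mul ((2 * π * σ ^ 2) ^ (-(d : ℝ) / 2))).log (by positivity)
    have h2 : fderiv ℝ (fun z => Real.log (perturbDensity d P σ z)) x = _ := h1.fderiv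
    unfold scoreOf gradient
    rw [h2, LinearIsometryEquiv.norm_map, norm_smul, norm_smul, Real.norm_eq_abs, Real.norm_eq_abs,
      abs_of_pos hC, abs_of_pos (by positivity)]
    field_simp
  simp only [mul_left_comm _ c]
  rw [integral_const_mul, integral_const_mul, mul_div_mul_left _ _ hc.ne', hs]
  set q := ∫ y, Real.exp (-‖x - y‖ ^ 2 / (2 * σ ^ 2)) ∂P with hqd
  set B := ∫ y, ‖x - y‖ * Real.exp (-‖x - y‖ ^ 2 / (2 * σ ^ 2)) ∂P with hB
  set A := ∫ y, ‖x - y‖ ^ 2 * Real.exp (-‖x - y‖ ^ 2 / (2 * σ ^ 2)) ∂P with hA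
  calc (q⁻¹ * ‖L‖) ^ 2 ≤ (q⁻¹ * ((σ ^ 2)⁻¹ * B)) ^ 2 := by gcongr
    _ = (σ ^ 4)⁻¹ * (q⁻¹ ^ 2 * B ^ 2) := by ring
    _ ≤ (σ ^ 4)⁻¹ * (q⁻¹ ^ 2 * (A * q)) := by gcongr
    _ = (σ ^ 4)⁻¹ * (A / q) := by field_simp

theorem aux_cov (d : ℕ) {σ : ℝ} (hσ : 0 < σ) (y : Vec d) {H : Vec d → ENNReal}
    (hH : Measurable H) :
    ∫⁻ z, H (y + σ • z) = ENNReal.ofReal (abs (σ ^ d)⁻¹) * ∫⁻ x, H x := by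
  have h1 := Measure.map_addHaar_smul (volume : Measure (Vec d)) hσ.ne'
  rw [finrank_euclideanSpace_fin] at h1
  have h2 : ∫⁻ z, H (y + σ • z) = ∫⁻ w, H (y + w) ∂(Measure.map (σ • ·) (volume : Measure (Vec d))) :=
    (lintegral_map (hH.comp (measurable_const_add y)) (measurable_const_smul σ)).symm
  rw [h2, h1, lintegral_smul_measure, lintegral_add_left_eq_self, smul_eq_mul]

/-- Lemma `score-bound` (2): second moment bound for the score of a
Gaussian perturbation. -/
theorem statement17 :
    ∀ (d : ℕ) (σ : ℝ) (P : Measure (Vec d)),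
      IsProbabilityMeasure P → 0 < σ →
      (∫ x, ‖scoreOf (perturbDensity d P σ) x‖ ^ 2 ∂(perturbLaw d P σ)) ≤ d / σ ^ 2 := by
  intro d σ P hP hσ
  set c : ℝ := (2 * π) ^ (-(d : ℝ) / 2) with hcd
  have hc : 0 < c := by positivity
  let g : Vec d → ENNReal := fun u => ENNReal.ofReal (c * Real.exp (-‖u‖ ^ 2 / (2 * σ ^ 2)))
  let w : Vec d → ENNReal := fun u =>
    ENNReal.ofReal (‖u‖ ^ 2 * (c * Real.exp (-‖u‖ ^ 2 / (2 * σ ^ 2))))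
  have hg : Measurable g := by fun_prop
  have hw : Measurable w := by fun_prop
  let q : Vec d → ENNReal := fun x => ∫⁻ y, g (x - y) ∂P
  let A : Vec d → ENNReal := fun x => ∫⁻ y, w (x - y) ∂P
  have hgm : Measurable (fun p : Vec d × Vec d => g (p.1 - p.2)) := by fun_prop
  have hwm : Measurable (fun p : Vec d × Vec d => w (p.1 - p.2)) := by fun_prop
  have hq : Measurable q := hgm.lintegral_prod_right'
  have hA : Measurable A := hwm.lintegral_prod_right'
  let s : ENNReal := ENNReal.ofReal ((σ ^ 4)⁻¹)
  let κ : ENNReal := ENNReal.ofReal (abs (σ ^ d)⁻¹)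
  let G : Vec d → ENNReal := fun x => s * (A x / q x)
  have hG : Measurable G := (hA.div hq).const_mul s
  have hFG : ∀ x, ENNReal.ofReal ‖‖scoreOf (perturbDensity d P σ) x‖ ^ 2‖ ≤ G x := by
    intro x
    rw [norm_of_nonneg (by positivity)]
    refine (ENNReal.ofReal_le_ofReal (aux_score d hσ P x hc)).trans (le_of_eq ?_)
    have hpos : 0 < ∫ y, c * Real.exp (-‖x - y‖ ^ 2 / (2 * σ ^ 2)) ∂P := by
      rw [integral_const_mul]; exact mul_pos hc (aux_pos d hσ P x)
    rw [ENNReal.ofReal_mul (by positivity), ENNReal.ofReal_div_of_pos hpos,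
      ofReal_integral_eq_lintegral_ofReal, ofReal_integral_eq_lintegral_ofReal]
    · exact (aux_int0 d hσ P x).const_mul c
    · exact Filter.Eventually.of_forall fun y => by simp only [Pi.zero_apply]; positivity
    · simp only [mul_left_comm _ c]
      exact (aux_int2 d hσ P x).const_mul c
    · exact Filter.Eventually.of_forall fun y => by simp only [Pi.zero_apply]; positivity
  have hnorm : ∀ z : Vec d, -‖σ • z‖ ^ 2 / (2 * σ ^ 2) = -‖z‖ ^ 2 / 2 := by
    intro z
    rw [norm_smul, Real.norm_eq_abs, abs_of_pos hσ]
    field_simp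
  have hmeasmap : Measurable (fun q : Vec d × Vec d => q.1 + σ • q.2) := by fun_prop
  have hdens : Measurable (fun x : Vec d =>
      ENNReal.ofReal ((2 * π) ^ (-(d : ℝ) / 2) * Real.exp (-‖x‖ ^ 2 / 2))) := by fun_prop
  have key : ∫⁻ x, G x ∂(perturbLaw d P σ) ≤ ENNReal.ofReal (d / σ ^ 2) := by
    unfold perturbLaw
    rw [lintegral_map hG hmeasmap, lintegral_prod _ (by fun_prop)]
    calc _ = ∫⁻ y, (∫⁻ z, g ((y + σ • z) - y) * G (y + σ • z)) ∂P := by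
          refine lintegral_congr fun y => ?_
          rw [lintegral_withDensity_eq_lintegral_mul _ hdens (by fun_prop)]
          refine lintegral_congr fun z => ?_
          simp only [g, Pi.mul_apply, add_sub_cancel_left, hnorm, hcd]
      _ = ∫⁻ y, (κ * ∫⁻ x, g (x - y) * G x) ∂P := by
          refine lintegral_congr fun y => ?_
          exact aux_cov d hσ y (H := fun x => g (x - y) * G x) (by fun_prop)
      _ = κ * ∫⁻ x, q x * G x := by
          rw [lintegral_const_mul' _ _ ENNReal.ofReal_ne_top, lintegral_lintegral_swap (by fun_prop)]
          congr 1
          refine lintegral_congr fun x => ?_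
          rw [lintegral_mul_const _ (by fun_prop)]
      _ ≤ κ * ∫⁻ x, s * A x := by
          refine mul_le_mul_right (lintegral_mono fun x => ?_) κ
          calc q x * (s * (A x / q x)) = s * (q x * (A x / q x)) := by ring
            _ ≤ s * A x := by gcongr; exact ENNReal.mul_div_le
      _ = s * ∫⁻ y, (κ * ∫⁻ x, w (x - y)) ∂P := by
          rw [lintegral_const_mul' _ _ ENNReal.ofReal_ne_top,
            lintegral_const_mul' _ _ ENNReal.ofReal_ne_top, lintegral_lintegral_swap (by fun_prop)]
          ring
      _ = s * ∫⁻ y, (∫⁻ z, w ((y + σ • z) - y)) ∂P := by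
          congr 1
          refine lintegral_congr fun y => ?_
          exact (aux_cov d hσ y (H := fun x => w (x - y)) (by fun_prop)).symm
      _ ≤ s * ∫⁻ y, ENNReal.ofReal (σ ^ 2) * ENNReal.ofReal d ∂P := by
          gcongr with y
          refine le_trans (le_of_eq ?_) (mul_le_mul_right (aux_moment d) _)
          rw [← lintegral_const_mul' _ _ ENNReal.ofReal_ne_top]
          refine lintegral_congr fun z => ?_
          rw [← ENNReal.ofReal_mul (by positivity)]
          simp only [w, add_sub_cancel_left, hnorm]
          rw [norm_smul, hcd, Real.norm_eq_abs, abs_of_pos hσ]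
          congr 1
          ring
      _ = ENNReal.ofReal (d / σ ^ 2) := by
          rw [lintegral_const, measure_univ, mul_one, ← ENNReal.ofReal_mul (by positivity),
            ← ENNReal.ofReal_mul (by positivity)]
          congr 1
          field_simp
  calc _ ≤ ‖∫ x, ‖scoreOf (perturbDensity d P σ) x‖ ^ 2 ∂(perturbLaw d P σ)‖ := le_abs_self _
    _ ≤ _ := norm_integral_le_lintegral_norm _
    _ ≤ (ENNReal.ofReal (d / σ ^ 2)).toReal :=
        ENNReal.toReal_mono ENNReal.ofReal_ne_top ((lintegral_mono hFG).trans key)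
    _ = _ := ENNReal.toReal_ofReal (by positivity)

end DiffusionKL
end
end
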